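/- arXiv:1711.02514 — 2 statements merged into one kernel-verified Lean document; each statement's English description precedes it below -/
import Mathlib

section
/- Let P be a centrally symmetric convex dodecagon (a convex polygon with exactly 12 vertices, symmetric about a point) and let P + X be a k-fold translative tiling of the plane. Suppose a vertex v ∈ V + X lies in the relative interior of an edge G of some translate P + x_j, and let v′ and v* denote the two endpoints of G. Then there exist four pairwise distinct points y′₁, y′₂, y*₁, y*₂ of X such that v′ ∈ ∂(P) + y′_i and v ∈ int(P) + y′_i for i = 1, 2, and v* ∈ ∂(P) + y*_i and v ∈ int(P) + y*_i for i = 1, 2; in particular, at least 4 translates of int(P) contain v. -/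
open Pointwise

/-- `K + X` is a `k`-fold translative tiling of the plane: the translate multiset
`(x i)` is discrete, every point of the plane belongs to at least `k` of the translates
`K + x i`, and every point belongs to at most `k` of the translates `interior K + x i`
(multiplicity counted over the index set). -/
def IsKFoldTranslativeTiling {ι : Type} (K : Set (ℝ × ℝ)) (x : ι → ℝ × ℝ) (k : ℕ) : Prop :=
  (∀ R : ℝ, {i : ι | ‖x i‖ ≤ R}.Finite) ∧
  (∀ p : ℝ × ℝ, ∃ s : Finset ι, k ≤ s.card ∧ ∀ i ∈ s, p - x i ∈ K) ∧
  (∀ p : ℝ × ℝ, ∀ s : Finset ι, (∀ i ∈ s, p - x i ∈ interior K) → s.card ≤ k)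

/-- `P` is a (two-dimensional) convex polygon whose vertex set is the finite set `V`:
`P` is the convex hull of `V`, every element of `V` is an extreme point of `P`
(so `V` is exactly the vertex set), and `P` has nonempty interior. -/
def IsConvexPolygon (P : Set (ℝ × ℝ)) (V : Finset (ℝ × ℝ)) : Prop :=
  P = convexHull ℝ (V : Set (ℝ × ℝ)) ∧
  (∀ v ∈ V, v ∈ Set.extremePoints ℝ P) ∧
  (interior P).Nonempty

/-- `P` is symmetric about some point `c`. -/
def IsCentrallySymmetric (P : Set (ℝ × ℝ)) : Prop :=
  ∃ c : ℝ × ℝ, ∀ p ∈ P, 2 • c - p ∈ P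

/-- The segment `[a, b]` is an edge of the convex polygon `P` with vertex set `V`. -/
def IsEdge (P : Set (ℝ × ℝ)) (V : Finset (ℝ × ℝ)) (a b : ℝ × ℝ) : Prop :=
  a ∈ V ∧ b ∈ V ∧ a ≠ b ∧ segment ℝ a b ⊆ frontier P

namespace Dodeca

/-- kernel of a nonzero functional in the plane is a line -/
lemma ker_line (f : (ℝ × ℝ) →L[ℝ] ℝ) {r u y : ℝ × ℝ} (hr : f r ≠ 0) (hu : u ≠ 0) (hfu : f u = 0)
    (hy : f y = 0) : ∃ s : ℝ, y = s • u := by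
  have hf : ∀ z : ℝ × ℝ, f z = z.1 * f (1, 0) + z.2 * f (0, 1) := by
    intro z
    have : z = z.1 • ((1, 0) : ℝ × ℝ) + z.2 • ((0, 1) : ℝ × ℝ) := by
      ext <;> simp
    conv_lhs => rw [this]
    rw [map_add, map_smul, map_smul]; simp
  obtain ⟨u1, u2⟩ := u
  obtain ⟨y1, y2⟩ := y
  rw [hf] at hr hfu hy
  set α := f (1, 0)
  set β := f (0, 1)
  simp only at hfu hy
  have hdet : u1 * y2 = u2 * y1 := by
    by_cases hα : α = 0
    · have hβ : β ≠ 0 := by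
        rintro h; apply hr; rw [hα, h]; ring
      rw [hα] at hfu hy
      have h1 : u2 = 0 := by
        have : u2 * β = 0 := by linarith
        simpa [hβ] using this
      have h2 : y2 = 0 := by
        have : y2 * β = 0 := by linarith
        simpa [hβ] using this
      rw [h1, h2]; ring
    · have : α * (u1 * y2 - u2 * y1) = 0 := by linear_combination y2 * hfu - u2 * hy
      rcases mul_eq_zero.1 this with h | h
      · exact absurd h hα
      · linarith
  by_cases h1 : u1 = 0
  · have h2 : u2 ≠ 0 := by
      rintro h; apply hu; rw [h1, h]; rfl
    refine ⟨y2 / u2, ?_⟩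
    have : y1 = 0 := by
      rw [h1] at hdet
      have : u2 * y1 = 0 := by linarith
      simpa [h2] using this
    ext
    · simp [this, h1]
    · simp [h2]
  · refine ⟨y1 / u1, ?_⟩
    ext
    · simp [h1]
    · simp; field_simp; linarith

lemma ext_no {P : Set (ℝ × ℝ)} {w d : ℝ × ℝ} (hw : w ∈ Set.extremePoints ℝ P) {α β : ℝ}
    (hα : 0 < α) (hβ : 0 < β) (h1 : w + α • d ∈ P) (h2 : w - β • d ∈ P) : d = 0 := by
  have := (mem_extremePoints.1 hw).2 _ h1 _ h2 ⟨β / (α + β), α / (α + β), by positivity,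
    by positivity, by field_simp; ring, by
      ext
      · simp; field_simp; ring
      · simp; field_simp; ring⟩
  have h := this.1
  have h3 : α • d = 0 := by simpa using h
  exact (smul_eq_zero.1 h3).resolve_left hα.ne'

lemma int_between {P : Set (ℝ × ℝ)} (hc : Convex ℝ P) {z d : ℝ × ℝ} {α β : ℝ}
    (hα : 0 < α) (hβ : 0 < β) (h1 : z + α • d ∈ interior P) (h2 : z - β • d ∈ P) :
    z ∈ interior P := by
  have := hc.combo_interior_self_mem_interior h1 h2 (a := β / (α + β)) (b := α / (α + β))
    (by positivity) (by positivity) (by field_simp; ring)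
  convert this using 1
  ext
  · simp; field_simp; ring
  · simp; field_simp; ring

lemma int_ray {P : Set (ℝ × ℝ)} (hc : Convex ℝ P) {z d : ℝ × ℝ} {t : ℝ}
    (ht : 0 < t) (ht1 : t ≤ 1) (hz : z ∈ P) (h1 : z + d ∈ interior P) :
    z + t • d ∈ interior P := by
  have := hc.combo_interior_self_mem_interior h1 hz (a := t) (b := 1 - t)
    ht (by linarith) (by ring)
  convert this using 1
  module

/-- data of a symmetric convex body -/
structure Body (P : Set (ℝ × ℝ)) (c : ℝ × ℝ) : Prop where
  conv : Convex ℝ P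
  closed : IsClosed P
  bdd : Bornology.IsBounded P
  sym : ∀ p ∈ P, c + c - p ∈ P
  cint : c ∈ interior P

lemma body_of {P : Set (ℝ × ℝ)} {V : Finset (ℝ × ℝ)} (hP : IsConvexPolygon P V) 
    (hsym : IsCentrallySymmetric P) : ∃ c, Body P c := by
  obtain ⟨h1, h2, y, hy⟩ := hP
  obtain ⟨c, hc⟩ := hsym
  have hs : ∀ p ∈ P, c + c - p ∈ P := by
    intro p hp
    have := hc p hp
    rwa [two_smul] at this
  have hcomp : IsCompact P := by
    rw [h1]; exact V.finite_toSet.isCompact_convexHull ℝ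
  have hconv : Convex ℝ P := by rw [h1]; exact convex_convexHull ℝ _
  refine ⟨c, hconv, hcomp.isClosed, hcomp.isBounded, hs, ?_⟩
  have := hconv.combo_interior_self_mem_interior hy (hs y (interior_subset hy)) (a := 1/2)
    (b := 1/2) (by norm_num) (by norm_num) (by norm_num)
  convert this using 1
  module

lemma supp {P : Set (ℝ × ℝ)} {c : ℝ × ℝ} (hB : Body P c) {z : ℝ × ℝ} (hz : z ∉ interior P) :
    ∃ f : (ℝ × ℝ) →L[ℝ] ℝ, (∀ y ∈ interior P, f y < f z) ∧ ∀ y ∈ P, f y ≤ f z := by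
  obtain ⟨f, hf⟩ := geometric_hahn_banach_open_point hB.conv.interior isOpen_interior hz
  refine ⟨f, hf, ?_⟩
  intro y hy
  have h1 : y ∈ closure (interior P) := by
    rw [hB.conv.closure_interior_eq_closure_of_nonempty_interior ⟨c, hB.cint⟩]
    exact subset_closure hy
  exact closure_minimal (t := {y | f y ≤ f z}) (fun y hy => (hf y hy).le)
    (isClosed_le f.continuous continuous_const) h1

lemma edge_supp {P : Set (ℝ × ℝ)} {V : Finset (ℝ × ℝ)} {c : ℝ × ℝ} (hB : Body P c)
    (hVP : ∀ v ∈ V, v ∈ P)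
    {p q : ℝ × ℝ} (hE : IsEdge P V p q) :
    ∃ f : (ℝ × ℝ) →L[ℝ] ℝ, f q = f p ∧ (∀ y ∈ interior P, f y < f p) ∧ ∀ y ∈ P, f y ≤ f p := by
  obtain ⟨hp, hq, hne, hs⟩ := hE
  have hm : (1/2 : ℝ) • p + (1/2 : ℝ) • q ∉ interior P := by
    have := hs (⟨1/2, 1/2, by norm_num, by norm_num, by norm_num, rfl⟩ :
      (1/2 : ℝ) • p + (1/2 : ℝ) • q ∈ segment ℝ p q)
    exact this.2
  obtain ⟨f, h1, h2⟩ := supp hB hm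
  have h3 := h2 p (hVP p hp)
  have h4 := h2 q (hVP q hq)
  have h5 : f ((1/2 : ℝ) • p + (1/2 : ℝ) • q) = (f p + f q) / 2 := by
    rw [map_add, map_smul, map_smul]; simp; ring
  rw [h5] at h1 h2 h3 h4
  have h6 : f q = f p := by linarith
  refine ⟨f, h6, fun y hy => ?_, fun y hy => ?_⟩
  · have := h1 y hy; linarith
  · have := h2 y hy; linarith

/-- level sets strictly between meet the interior -/
lemma level {P : Set (ℝ × ℝ)} {c : ℝ × ℝ} (hB : Body P c) (f : (ℝ × ℝ) →L[ℝ] ℝ) {p : ℝ × ℝ}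
    (hp : p ∈ P) (hcp : f c < f p) {z : ℝ × ℝ} (h1 : f z < f p) (h2 : 2 * f c - f p < f z) :
    ∃ y ∈ interior P, f y = f z := by
  have hd : 0 < f p - f c := by linarith
  by_cases h : f c ≤ f z
  · have hl : (f z - f c) / (f p - f c) < 1 := by rw [div_lt_one hd]; linarith
    have hl0 : 0 ≤ (f z - f c) / (f p - f c) := div_nonneg (by linarith) hd.le
    refine ⟨_, hB.conv.combo_interior_self_mem_interior hB.cint hp
      (a := 1 - (f z - f c) / (f p - f c)) (b := (f z - f c) / (f p - f c))
      (by linarith) hl0 (by ring), ?_⟩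
    rw [map_add, map_smul, map_smul, smul_eq_mul, smul_eq_mul]
    field_simp; ring
  · have hl : (f c - f z) / (f p - f c) < 1 := by rw [div_lt_one hd]; linarith
    have hl0 : 0 ≤ (f c - f z) / (f p - f c) := div_nonneg (by linarith) hd.le
    refine ⟨_, hB.conv.combo_interior_self_mem_interior hB.cint (hB.sym p hp)
      (a := 1 - (f c - f z) / (f p - f c)) (b := (f c - f z) / (f p - f c))
      (by linarith) hl0 (by ring), ?_⟩
    rw [map_add, map_smul, map_smul, smul_eq_mul, smul_eq_mul, map_sub, map_add]
    field_simp; ring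

/-- the top face of an edge functional is the edge -/
lemma face {P : Set (ℝ × ℝ)} {p q : ℝ × ℝ} (hp : p ∈ Set.extremePoints ℝ P)
    (hq : q ∈ Set.extremePoints ℝ P) (hne : p ≠ q) (f : (ℝ × ℝ) →L[ℝ] ℝ) {c : ℝ × ℝ}
    (hc : f c < f p) (hpq : f q = f p) {z : ℝ × ℝ} (hz : z ∈ P) (hfz : f z = f p) :
    ∃ s : ℝ, 0 ≤ s ∧ s ≤ 1 ∧ z = p + s • (q - p) := by
  have hu : q - p ≠ 0 := sub_ne_zero.2 hne.symm
  obtain ⟨s, hs⟩ := ker_line f (r := c - p) (u := q - p) (y := z - p)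
    (by rw [map_sub]; linarith) hu (by rw [map_sub]; linarith) (by rw [map_sub]; linarith)
  have hz' : z = p + s • (q - p) := by rw [← hs]; abel
  refine ⟨s, ?_, ?_, hz'⟩
  · by_contra h
    push Not at h
    refine hu (ext_no hp (α := 1) (β := -s) one_pos (by linarith) ?_ ?_)
    · convert hq.1 using 1; module
    · convert hz using 1; rw [hz']; module
  · by_contra h
    push Not at h
    refine hu (ext_no hq (α := s - 1) (β := 1) (by linarith) one_pos ?_ ?_)
    · convert hz using 1; rw [hz']; module
    · convert hp.1 using 1; module

open Filter Topology

def Ent (P : Set (ℝ × ℝ)) (u w z : ℝ × ℝ) : Prop :=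
  ∀ᶠ δ : ℝ in 𝓝[>] 0, ∀ᶠ t : ℝ in 𝓝[>] 0, z + t • (u + δ • w) ∈ interior P

lemma ev_pos_le {a : ℝ} (ha : 0 < a) : ∀ᶠ t : ℝ in 𝓝[>] 0, 0 < t ∧ t ≤ a := by
  filter_upwards [Ioc_mem_nhdsGT ha] with t ht
  exact ht

lemma ent_int {P : Set (ℝ × ℝ)} {u w z : ℝ × ℝ} (hz : z ∈ interior P) : Ent P u w z := by
  refine Eventually.of_forall fun δ => ?_
  have h : Tendsto (fun t : ℝ => z + t • (u + δ • w)) (𝓝 0) (𝓝 z) := by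
    have : Continuous (fun t : ℝ => z + t • (u + δ • w)) := by fun_prop
    simpa using this.tendsto 0
  exact nhdsWithin_le_nhds (h (isOpen_interior.mem_nhds hz))

lemma ent_mid {P : Set (ℝ × ℝ)} (hc : Convex ℝ P) {u w z : ℝ × ℝ} {s : ℝ} (hs : 0 < s)
    (hz : z ∈ P) (h1 : z + s • u ∈ interior P) : Ent P u w z := by
  have h : Tendsto (fun δ : ℝ => z + s • (u + δ • w)) (𝓝 0) (𝓝 (z + s • u)) := by
    have : Continuous (fun δ : ℝ => z + s • (u + δ • w)) := by fun_prop
    simpa using this.tendsto 0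
  filter_upwards [nhdsWithin_le_nhds (h (isOpen_interior.mem_nhds h1))] with δ hδ
  filter_upwards [ev_pos_le hs] with t ht
  have := int_ray hc (t := t / s) (div_pos ht.1 hs) ((div_le_one hs).2 ht.2) hz hδ
  rwa [smul_smul, div_mul_cancel₀ _ hs.ne'] at this

lemma ent_face {P : Set (ℝ × ℝ)} {c : ℝ × ℝ} (hB : Body P c) {p q : ℝ × ℝ} (hp : p ∈ P)
    (hq : q ∈ P) {r : ℝ} (hr : 0 ≤ r) (hr1 : r < 1) :
    Ent P (q - p) (q - c) (c + c - q + r • (q - p)) := by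
  filter_upwards [ev_pos_le one_pos] with δ hδ
  filter_upwards [ev_pos_le (show 0 < (1 - r) / 2 by linarith)] with t ht
  obtain ⟨hδ0, hδ1⟩ := hδ
  obtain ⟨ht0, ht1⟩ := ht
  have h0 : 0 < δ * t := by positivity
  have h1 : δ * t ≤ t := by nlinarith
  have h2 : 0 < 1 - δ * t := by linarith
  have h3 : (r + t) / (1 - δ * t) ≤ 1 := by rw [div_le_one h2]; linarith
  have h4 : 0 ≤ (r + t) / (1 - δ * t) := by positivity
  have hy : (1 - (r + t) / (1 - δ * t)) • (c + c - q) + ((r + t) / (1 - δ * t)) • (c + c - p) ∈ P :=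
    hB.conv (hB.sym q hq) (hB.sym p hp) (by linarith) h4 (by ring)
  have := hB.conv.combo_interior_self_mem_interior hB.cint hy (a := δ * t) (b := 1 - δ * t)
    h0 h2.le (by ring)
  convert this using 1
  have he : (r + t) / (1 - δ * t) * (1 - δ * t) = r + t := div_mul_cancel₀ _ h2.ne'
  generalize (r + t) / (1 - δ * t) = e at he
  ext
  · simp
    linear_combination (-(q.1 - p.1)) * he
  · simp
    linear_combination (-(q.2 - p.2)) * he

lemma ent_or {P : Set (ℝ × ℝ)} {c : ℝ × ℝ} (hB : Body P c) {p q : ℝ × ℝ}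
    (hp : p ∈ Set.extremePoints ℝ P)
    (hq : q ∈ Set.extremePoints ℝ P) (hne : p ≠ q) (f : (ℝ × ℝ) →L[ℝ] ℝ)
    (hc : f c < f p) (hpq : f q = f p) (hf : ∀ y ∈ P, f y ≤ f p)
    {z : ℝ × ℝ} (hz : z ∈ P) (hzE : z ∉ segment ℝ p q) :
    Ent P (q - p) (q - c) z ∨ Ent P (p - q) (p - c) z := by
  have hu : q - p ≠ 0 := sub_ne_zero.2 hne.symm
  by_cases hInter : z ∈ interior P
  · exact Or.inl (ent_int hInter)
  have h1 : f z < f p := by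
    refine lt_of_le_of_ne (hf z hz) fun h => hzE ?_
    obtain ⟨s, hs0, hs1, hs⟩ := face hp hq hne f hc hpq hz h
    exact ⟨1 - s, s, by linarith, hs0, by ring, by rw [hs]; module⟩
  have h2 : 2 * f c - f p ≤ f z := by
    have := hf _ (hB.sym z hz)
    rw [map_sub, map_add] at this; linarith
  rcases h2.eq_or_lt with h2 | h2
  · obtain ⟨s, hs0, hs1, hs⟩ := face hp hq hne f hc hpq (hB.sym z hz)
      (by rw [map_sub, map_add]; linarith)
    by_cases h : s = 0
    · right
      have := ent_face hB hq.1 hp.1 (r := 0) le_rfl one_pos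
      convert this using 1
      have : z = c + c - (p + s • (q - p)) := by rw [← hs]; abel
      rw [this, h]; module
    · left
      have hs' := lt_of_le_of_ne hs0 (Ne.symm h)
      have := ent_face hB hp.1 hq.1 (r := 1 - s) (by linarith) (by linarith)
      convert this using 1
      have : z = c + c - (p + s • (q - p)) := by rw [← hs]; abel
      rw [this]; module
  · obtain ⟨y, hy, hyz⟩ := level hB f hp.1 hc h1 h2
    obtain ⟨s, hs⟩ := ker_line f (r := c - p) (u := q - p) (y := y - z)
      (by rw [map_sub]; linarith) hu (by rw [map_sub]; linarith) (by rw [map_sub]; linarith)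
    have hy' : y = z + s • (q - p) := by rw [← hs]; abel
    rcases lt_trichotomy s 0 with h | h | h
    · right
      refine ent_mid hB.conv (s := -s) (by linarith) hz ?_
      convert hy using 1; rw [hy']; module
    · exfalso; apply hInter
      convert hy using 1; rw [hy', h]; module
    · left
      refine ent_mid hB.conv h hz ?_
      convert hy using 1; exact hy'.symm

/-- exposing functional at a vertex -/
lemma expose {P : Set (ℝ × ℝ)} {V : Finset (ℝ × ℝ)} (hP : IsConvexPolygon P V) {p : ℝ × ℝ}
    (hp : p ∈ V) : ∃ f : (ℝ × ℝ) →L[ℝ] ℝ, ∀ y ∈ P, y ≠ p → f y < f p := by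
  obtain ⟨h1, h2, h3⟩ := hP
  have hPc : Convex ℝ P := by rw [h1]; exact convex_convexHull ℝ _
  set K := convexHull ℝ ((V.erase p : Finset (ℝ × ℝ)) : Set (ℝ × ℝ)) with hK
  have hKc : IsCompact K := (V.erase p).finite_toSet.isCompact_convexHull ℝ
  have hpK : p ∉ K := by
    have := (hPc.mem_extremePoints_iff_convex_sdiff.1 (h2 p hp)).2
    intro h
    have hsub : K ⊆ P \ {p} := by
      refine convexHull_min ?_ this
      intro v hv
      simp only [Finset.coe_erase, Set.mem_sdiff, Finset.mem_coe] at hv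
      refine ⟨?_, hv.2⟩
      rw [h1]; exact subset_convexHull ℝ _ hv.1
    exact (hsub h).2 rfl
  obtain ⟨f, u, hfu, hfK⟩ := geometric_hahn_banach_point_closed (convex_convexHull ℝ _)
    hKc.isClosed hpK
  refine ⟨-f, ?_⟩
  intro y hy hyp
  have hins : (V : Set (ℝ × ℝ)) = insert p ((V.erase p : Finset (ℝ × ℝ)) : Set (ℝ × ℝ)) := by
    rw [← Finset.coe_insert, Finset.insert_erase hp]
  by_cases hemp : (V.erase p).Nonempty
  · rw [h1, hins, convexHull_insert (Finset.coe_nonempty.2 hemp)] at hy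
    simp only [convexJoin_singleton_left, Set.mem_iUnion] at hy
    obtain ⟨w, hw, a, b, ha, hb, hab, rfl⟩ := hy
    have hb' : 0 < b := by
      rcases hb.eq_or_lt with h | h
      · exfalso; apply hyp; rw [← h] at hab ⊢; rw [add_zero] at hab; rw [hab]; simp
      · exact h
    have := hfK w hw
    simp only [neg_apply, map_add, map_smul, smul_eq_mul]
    have ha' : a = 1 - b := by linarith
    rw [ha']
    nlinarith
  · rw [Finset.not_nonempty_iff_eq_empty] at hemp
    rw [h1, hins, hemp] at hy
    simp at hy
    exact absurd hy hyp

lemma exists_ker (f : (ℝ × ℝ) →L[ℝ] ℝ) : ∃ w : ℝ × ℝ, w ≠ 0 ∧ f w = 0 := by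
  by_cases h : f (1, 0) = 0
  · exact ⟨(1, 0), by simp, h⟩
  · refine ⟨f (0, 1) • (1, 0) - f (1, 0) • (0, 1), ?_, ?_⟩
    · intro h0
      have := congrArg Prod.snd h0
      simp at this
      exact h this
    · rw [map_sub, map_smul, map_smul, smul_eq_mul, smul_eq_mul]; ring

lemma fin_near {P : Set (ℝ × ℝ)} (hb : Bornology.IsBounded P) {ι : Type} {x : ι → ℝ × ℝ}
    (hx : ∀ R : ℝ, {i : ι | ‖x i‖ ≤ R}.Finite) (v w : ℝ × ℝ) :
    {i : ι | ∃ t : ℝ, 0 ≤ t ∧ t ≤ 1 ∧ v + t • w - x i ∈ P}.Finite := by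
  obtain ⟨R, hR⟩ := hb.exists_norm_le
  refine (hx (R + ‖v‖ + ‖w‖)).subset ?_
  rintro i ⟨t, h0, h1, h⟩
  have h2 := hR _ h
  have h3 : x i = v + t • w - (v + t • w - x i) := by abel
  have h4 : ‖t • w‖ ≤ ‖w‖ := by
    rw [norm_smul, Real.norm_of_nonneg h0]
    nlinarith [norm_nonneg w]
  have h5 : ‖v + t • w - (v + t • w - x i)‖ ≤ ‖v + t • w‖ + ‖v + t • w - x i‖ := norm_sub_le _ _
  have h6 := norm_add_le v (t • w)
  simp only [Set.mem_ofPred_eq]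
  rw [h3]
  linarith

lemma vertex_mid {P : Set (ℝ × ℝ)} {c : ℝ × ℝ} (hB : Body P c) {p w : ℝ × ℝ} (hp : p ∈ P)
    (f : (ℝ × ℝ) →L[ℝ] ℝ) (hf : ∀ y ∈ P, y ≠ p → f y < f p) (hw : w ≠ 0) (hfw : f w = 0)
    (hcp : c ≠ p) {z : ℝ × ℝ} {t : ℝ} (ht : 0 < t) (hz : z ∈ P) (h1 : z + t • w ∈ P)
    (h2 : z - t • w ∈ P) : z ∈ interior P := by
  have hc : f c < f p := hf c (interior_subset hB.cint) hcp
  have htw : t • w ≠ 0 := smul_ne_zero ht.ne' hw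
  have key : ∀ y ∈ P, y + t • w ∈ P → f y < f p := by
    intro y hy hy'
    by_cases hyp : y = p
    · exfalso
      have : y + t • w ≠ p := by rw [hyp]; simpa using htw
      have := hf _ hy' this
      rw [map_add, map_smul, hfw, hyp] at this
      simp at this
    · exact hf y hy hyp
  have h3 := key z hz h1
  have h4 := key _ (hB.sym z hz) (by
    convert hB.sym _ h2 using 1; abel)
  rw [map_sub, map_add] at h4
  obtain ⟨y, hy, hyz⟩ := level hB f hp hc h3 (by linarith)
  obtain ⟨s, hs⟩ := ker_line f (r := c - p) (u := w) (y := y - z)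
      (by rw [map_sub]; linarith) hw hfw (by rw [map_sub]; linarith)
  have hy' : y = z + s • w := by rw [← hs]; abel
  rcases lt_trichotomy s 0 with h | h | h
  · refine int_between hB.conv (d := -w) (α := -s) (β := t) (by linarith) ht ?_ ?_
    · convert hy using 1; rw [hy']; module
    · convert h1 using 1; module
  · convert hy using 1; rw [hy', h]; module
  · refine int_between hB.conv (d := w) (α := s) (β := t) h ht ?_ h2
    convert hy using 1; exact hy'.symm

lemma no_near {P : Set (ℝ × ℝ)} (hcl : IsClosed P) {z w : ℝ × ℝ} (hz : z ∉ P) :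
    ∀ᶠ t : ℝ in 𝓝[>] 0, z + t • w ∉ P := by
  have h : Tendsto (fun t : ℝ => z + t • w) (𝓝 0) (𝓝 z) := by
    have : Continuous (fun t : ℝ => z + t • w) := by fun_prop
    simpa using this.tendsto 0
  exact nhdsWithin_le_nhds (h (hcl.isOpen_compl.mem_nhds hz))

/-- a point that is a vertex of some translate lies on each edge of `P` in some translate -/
lemma on_edge {P : Set (ℝ × ℝ)} {V : Finset (ℝ × ℝ)} (hP : IsConvexPolygon P V) {c : ℝ × ℝ}
    (hB : Body P c) {k : ℕ} {ι : Type} {x : ι → ℝ × ℝ} (htile : IsKFoldTranslativeTiling P x k)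
    {v : ℝ × ℝ} {j : ι} (hv : v - x j ∈ V) {p q : ℝ × ℝ} (hE : IsEdge P V p q) :
    ∃ i, v - x i ∈ segment ℝ p q := by
  classical
  by_contra hno
  push Not at hno
  obtain ⟨hfin, hcov, hpack⟩ := htile
  have hVP : ∀ v ∈ V, v ∈ P := fun v hv => (hP.2.1 v hv).1
  have hFfin : {i | v - x i ∈ P}.Finite := (fin_near hB.bdd hfin v 0).subset (by
    intro i hi; exact ⟨0, le_rfl, zero_le_one, by simpa using hi⟩)
  set F : Finset ι := hFfin.toFinset with hF
  have memF : ∀ i, i ∈ F ↔ v - x i ∈ P := by intro i; simp [hF]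
  set Φ : Finset ι := F.filter (fun i => v - x i ∈ interior P) with hΦ
  -- first estimate
  have est1 : F.card + Φ.card ≤ 2 * k := by
    obtain ⟨f, hpq, hfi, hfP⟩ := edge_supp hB hVP hE
    have hor := fun i (hi : i ∈ F) => ent_or hB (hP.2.1 p hE.1) (hP.2.1 q hE.2.1) hE.2.2.1 f
      (hfi c hB.cint) hpq hfP ((memF i).1 hi) (hno i)
    have ev : ∀ u w : ℝ × ℝ, ∀ᶠ δ : ℝ in 𝓝[>] 0, ∀ᶠ t : ℝ in 𝓝[>] 0,
        ∀ i ∈ F, Ent P u w (v - x i) → (v - x i) + t • (u + δ • w) ∈ interior P := by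
      intro u w
      have : ∀ᶠ δ : ℝ in 𝓝[>] 0, ∀ i ∈ F, ∀ᶠ t : ℝ in 𝓝[>] 0, Ent P u w (v - x i) →
          (v - x i) + t • (u + δ • w) ∈ interior P := by
        rw [Filter.eventually_all_finset]
        intro i hi
        by_cases h : Ent P u w (v - x i)
        · filter_upwards [h] with δ hδ
          filter_upwards [hδ] with t ht _ using ht
        · exact Eventually.of_forall fun δ => Eventually.of_forall fun t h' => absurd h' h
      filter_upwards [this] with δ hδ
      rw [Filter.eventually_all_finset]
      exact hδ
    obtain ⟨δ, h1, h2⟩ := ((ev (q - p) (q - c)).and (ev (p - q) (p - c))).exists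
    obtain ⟨t, h1, h2⟩ := (h1.and h2).exists
    set d1 := t • (q - p + δ • (q - c))
    set d2 := t • (p - q + δ • (p - c))
    set S1 := F.filter (fun i => v - x i + d1 ∈ interior P) with hS1
    set S2 := F.filter (fun i => v - x i + d2 ∈ interior P) with hS2
    have c1 : S1.card ≤ k := hpack (v + d1) S1 (by
      intro i hi
      have := (Finset.mem_filter.1 hi).2
      convert this using 1; abel)
    have c2 : S2.card ≤ k := hpack (v + d2) S2 (by
      intro i hi
      have := (Finset.mem_filter.1 hi).2
      convert this using 1; abel)
    have u1 : F ⊆ S1 ∪ S2 := by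
      intro i hi
      rw [Finset.mem_union, hS1, hS2, Finset.mem_filter, Finset.mem_filter]
      rcases hor i hi with h | h
      · exact Or.inl ⟨hi, h1 i hi h⟩
      · exact Or.inr ⟨hi, h2 i hi h⟩
    have u2 : Φ ⊆ S1 ∩ S2 := by
      intro i hi
      obtain ⟨hi, hi'⟩ := Finset.mem_filter.1 hi
      rw [Finset.mem_inter, hS1, hS2, Finset.mem_filter, Finset.mem_filter]
      exact ⟨⟨hi, h1 i hi (ent_int hi')⟩, ⟨hi, h2 i hi (ent_int hi')⟩⟩
    have := Finset.card_union_add_card_inter S1 S2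
    have := Finset.card_le_card u1
    have := Finset.card_le_card u2
    omega
  -- second estimate
  have est2 : 2 * k + 1 ≤ F.card + Φ.card := by
    set p0 := v - x j with hp0
    have hp0P := hVP p0 hv
    obtain ⟨f, hf⟩ := expose hP hv
    obtain ⟨w, hw, hfw⟩ := exists_ker f
    have hcp : c ≠ p0 := by
      intro h
      have h1 : c ∈ Set.extremePoints ℝ P := by rw [h]; exact hP.2.1 p0 hv
      obtain ⟨t, ht⟩ := ((ev_pos_le (one_pos)).and (ent_int (u := w) (w := 0) hB.cint).exists.choose_spec).exists
      have h2 := interior_subset ht.2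
      have h3 := hB.sym _ h2
      refine hw (ext_no h1 (α := t) (β := t) ht.1.1 ht.1.1 ?_ ?_)
      · convert h2 using 1; simp
      · convert h3 using 1; simp
    have ev : ∀ w : ℝ × ℝ, ∀ᶠ t : ℝ in 𝓝[>] 0, ∀ i, v + t • w - x i ∈ P → i ∈ F := by
      intro w
      have hN := fin_near hB.bdd hfin v w
      have : ∀ᶠ t : ℝ in 𝓝[>] 0, ∀ i ∈ {i : ι | ∃ t : ℝ, 0 ≤ t ∧ t ≤ 1 ∧ v + t • w - x i ∈ P},
          v + t • w - x i ∈ P → i ∈ F := by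
        rw [Filter.eventually_all_finite hN]
        intro i _
        by_cases h : v - x i ∈ P
        · exact Eventually.of_forall fun t _ => (memF i).2 h
        · filter_upwards [no_near hB.closed (w := w) h] with t ht h'
          exfalso; apply ht; convert h' using 1; abel
      filter_upwards [this, ev_pos_le one_pos] with t ht ht1 i hi
      exact ht i ⟨t, ht1.1.le, ht1.2, hi⟩ hi
    obtain ⟨t, ⟨h1, h2⟩, ht⟩ := (((ev w).and (ev (-w))).and (ev_pos_le one_pos)).exists
    obtain ⟨R1, hR1, hR1'⟩ := hcov (v + t • w)
    obtain ⟨R2, hR2, hR2'⟩ := hcov (v + t • (-w))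
    have htw : t • w ≠ 0 := smul_ne_zero ht.1.ne' hw
    have hjF : j ∈ F := (memF j).2 hp0P
    have u1 : R1 ∪ R2 ⊆ F.erase j := by
      intro i hi
      rw [Finset.mem_erase]
      rcases Finset.mem_union.1 hi with hi | hi
      · refine ⟨?_, h1 i (hR1' i hi)⟩
        rintro rfl
        have h3 := hR1' _ hi
        have h4 : v + t • w - x i = p0 + t • w := by rw [hp0]; abel
        rw [h4] at h3
        have := hf _ h3 (by simpa using htw)
        rw [map_add, map_smul, hfw] at this
        simp at this
      · refine ⟨?_, h2 i (hR2' i hi)⟩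
        rintro rfl
        have h3 := hR2' _ hi
        have h4 : v + t • (-w) - x i = p0 - t • w := by rw [hp0]; module
        rw [h4] at h3
        have := hf _ h3 (by simpa using htw)
        rw [map_sub, map_smul, hfw] at this
        simp at this
    have u2 : R1 ∩ R2 ⊆ Φ := by
      intro i hi
      obtain ⟨hi1, hi2⟩ := Finset.mem_inter.1 hi
      have hiF := h1 i (hR1' i hi1)
      rw [hΦ, Finset.mem_filter]
      refine ⟨hiF, vertex_mid hB hp0P f hf hw hfw hcp ht.1 ((memF i).1 hiF) ?_ ?_⟩
      · convert hR1' i hi1 using 1; abel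
      · convert hR2' i hi2 using 1; module
    have := Finset.card_union_add_card_inter R1 R2
    have := Finset.card_le_card u1
    have := Finset.card_le_card u2
    have := Finset.card_erase_add_one hjF
    omega
  omega

lemma core {P : Set (ℝ × ℝ)} {V : Finset (ℝ × ℝ)} (hP : P = convexHull ℝ (V : Set (ℝ × ℝ)))
    (hext : ∀ v ∈ V, v ∈ Set.extremePoints ℝ P) (hV : V.card = 12)
    (hsym : ∀ p ∈ P, ((1, 1) : ℝ × ℝ) - p ∈ P) (h00 : ((0, 0) : ℝ × ℝ) ∈ V)
    (h10 : ((1, 0) : ℝ × ℝ) ∈ V) (hpos : ∀ p ∈ P, 0 ≤ p.2) :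
    ∃ p ∈ V, ∃ q ∈ V, ∃ r ∈ V, ∃ s ∈ V, p ≠ q ∧ r ≠ s ∧ segment ℝ p q ⊆ frontier P ∧
      segment ℝ r s ⊆ frontier P ∧ Disjoint (segment ℝ p q) (segment ℝ r s) ∧
      (∀ z ∈ segment ℝ p q, ∀ θ : ℝ, 0 < θ → θ ≤ 1 → z + (θ, 0) ∈ interior P) ∧
      (∀ z ∈ segment ℝ r s, ∀ θ : ℝ, 0 < θ → θ ≤ 1 → z + (θ, 0) ∈ interior P) := by
  classical
  have hconv : Convex ℝ P := by rw [hP]; exact convex_convexHull ℝ _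
  have hVP : ∀ v ∈ V, v ∈ P := fun v hv => (hext v hv).1
  have hVe : ∀ v ∈ Set.extremePoints ℝ P, v ∈ V := by
    intro v hv; rw [hP] at hv; exact extremePoints_convexHull_subset hv
  have hsymV : ∀ v ∈ V, ((1, 1) : ℝ × ℝ) - v ∈ V := by
    intro v hv
    apply hVe
    have h1 := hext v hv
    rw [mem_extremePoints]
    refine ⟨hsym v h1.1, ?_⟩
    intro y1 hy1 y2 hy2 ho
    have := (mem_extremePoints.1 h1).2 _ (hsym y1 hy1) _ (hsym y2 hy2) (by
      obtain ⟨a, b, ha, hb, hab, h⟩ := ho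
      refine ⟨a, b, ha, hb, hab, ?_⟩
      have h' : v = (1, 1) - (a • y1 + b • y2) := by rw [h]; abel
      rw [h']
      have hb' : b = 1 - a := by linarith
      rw [hb']; module)
    exact ⟨by rw [← this.1]; abel, by rw [← this.2]; abel⟩
  have h11 : ((1, 1) : ℝ × ℝ) ∈ V := by
    have := hsymV _ h00; simpa using this
  have h01 : ((0, 1) : ℝ × ℝ) ∈ V := by
    have := hsymV _ h10; simpa using this
  have hle : ∀ p ∈ P, p.2 ≤ 1 := by
    intro p hp
    have := hpos _ (hsym p hp)
    simp at this; exact this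
  have hsq : ∀ a b : ℝ, 0 ≤ a → a ≤ 1 → 0 ≤ b → b ≤ 1 → ((a, b) : ℝ × ℝ) ∈ P := by
    intro a b ha ha1 hb hb1
    have e1 : ((0, b) : ℝ × ℝ) ∈ P := by
      have := hconv (hVP _ h00) (hVP _ h01) (a := 1 - b) (b := b) (by linarith) hb (by ring)
      simpa using this
    have e2 : ((1, b) : ℝ × ℝ) ∈ P := by
      have := hconv (hVP _ h10) (hVP _ h11) (a := 1 - b) (b := b) (by linarith) hb (by ring)
      simpa using this
    have := hconv e1 e2 (a := 1 - a) (b := a) (by linarith) ha (by ring)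
    convert this using 1
    ext
    · simp
    · simp; ring
  -- horizontal extremality
  have hor : ∀ v ∈ V, ∀ y1 ∈ P, ∀ y2 ∈ P, y1.2 = v.2 → y2.2 = v.2 → y1.1 < v.1 → v.1 < y2.1 →
      False := by
    intro v hv y1 hy1 y2 hy2 e1 e2 l1 l2
    have := ext_no (hext v hv) (d := (1, 0)) (α := y2.1 - v.1) (β := v.1 - y1.1) (by linarith)
      (by linarith) (by convert hy2 using 1; ext <;> simp [e2])
      (by convert hy1 using 1; ext <;> simp [e1])
    simp at this
  have ver : ∀ v ∈ V, ∀ y1 ∈ P, ∀ y2 ∈ P, y1.1 = v.1 → y2.1 = v.1 → y1.2 < v.2 → v.2 < y2.2 →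
      False := by
    intro v hv y1 hy1 y2 hy2 e1 e2 l1 l2
    have := ext_no (hext v hv) (d := (0, 1)) (α := y2.2 - v.2) (β := v.2 - y1.2) (by linarith)
      (by linarith) (by convert hy2 using 1; ext <;> simp [e2])
      (by convert hy1 using 1; ext <;> simp [e1])
    simp at this
  set W := V.filter (fun p => p.1 < 0) with hW
  set R := V.filter (fun p => 1 < p.1) with hR
  set C : Finset (ℝ × ℝ) := {(0, 0), (1, 0), (1, 1), (0, 1)} with hC
  have hVsplit : V ⊆ (W ∪ R) ∪ C := by
    intro v hv
    have hvP := hVP v hv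
    have b0 := hpos v hvP
    have b1 := hle v hvP
    simp only [Finset.mem_union, hW, hR, Finset.mem_filter]
    by_cases c1 : v.1 < 0
    · exact Or.inl (Or.inl ⟨hv, c1⟩)
    by_cases c2 : 1 < v.1
    · exact Or.inl (Or.inr ⟨hv, c2⟩)
    right
    push Not at c1 c2
    have d1 : v.1 = 0 ∨ v.1 = 1 := by
      by_contra hh
      push Not at hh
      exact hor v hv (0, v.2) (hsq _ _ le_rfl zero_le_one b0 b1) (1, v.2)
        (hsq _ _ zero_le_one le_rfl b0 b1) rfl rfl (lt_of_le_of_ne c1 (Ne.symm hh.1))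
        (lt_of_le_of_ne c2 hh.2)
    have d2 : v.2 = 0 ∨ v.2 = 1 := by
      by_contra hh
      push Not at hh
      exact ver v hv (v.1, 0) (hsq _ _ c1 c2 le_rfl zero_le_one) (v.1, 1)
        (hsq _ _ c1 c2 zero_le_one le_rfl) rfl rfl (lt_of_le_of_ne b0 (Ne.symm hh.1))
        (lt_of_le_of_ne b1 hh.2)
    simp only [hC, Finset.mem_insert, Finset.mem_singleton, Prod.ext_iff]
    tauto
  have hWR : R.card ≤ W.card := by
    refine Finset.card_le_card_of_injOn (fun p => (1, 1) - p) ?_ ?_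
    · intro p hp
      simp only [hR, Finset.coe_filter, Set.mem_ofPred_eq] at hp
      simp only [hW, Finset.coe_filter, Set.mem_ofPred_eq]
      refine ⟨hsymV p hp.1, ?_⟩
      simp; exact hp.2
    · intro p _ q _ h
      simpa using h
  have hW4 : 4 ≤ W.card := by
    have h1 := Finset.card_le_card hVsplit
    have h2 := Finset.card_union_le (W ∪ R) C
    have h3 := Finset.card_union_le W R
    have h4 : C.card ≤ 4 := Finset.card_le_four
    omega
  have memW : ∀ w, w ∈ W ↔ w ∈ V ∧ w.1 < 0 := by intro w; simp [hW]
  have hWh : ∀ w ∈ W, 0 < w.2 ∧ w.2 < 1 := by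
    intro w hw
    obtain ⟨hwV, hw0⟩ := (memW w).1 hw
    have hwP := hVP w hwV
    constructor
    · refine lt_of_le_of_ne (hpos w hwP) fun h => ?_
      exact hor (0, 0) h00 w hwP (1, 0) (hVP _ h10) h.symm rfl hw0 one_pos
    · refine lt_of_le_of_ne (hle w hwP) fun h => ?_
      exact hor (0, 1) h01 w hwP (1, 1) (hVP _ h11) h rfl hw0 one_pos
  -- left extremality
  have left : ∀ w ∈ W, ∀ y ∈ P, y.2 = w.2 → w.1 ≤ y.1 := by
    intro w hw y hy e
    by_contra h
    push Not at h
    obtain ⟨b0, b1⟩ := hWh w hw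
    obtain ⟨hwV, hw0⟩ := (memW w).1 hw
    exact hor w hwV y hy (0, w.2) (hsq _ _ le_rfl zero_le_one b0.le b1.le) e rfl h hw0
  have inj : Set.InjOn Prod.snd (W : Set (ℝ × ℝ)) := by
    intro w hw w' hw' h
    have h1 := left w hw w' (hVP _ ((memW _).1 hw').1) h.symm
    have h2 := left w' hw' w (hVP _ ((memW _).1 hw).1) h
    exact Prod.ext (le_antisymm h1 h2) h
  -- edges
  have edge : ∀ w ∈ W, ∀ w' ∈ W, w.2 < w'.2 → (∀ u ∈ W, u.2 ≤ w.2 ∨ w'.2 ≤ u.2) →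
      segment ℝ w w' ⊆ frontier P := by
    intro w hw w' hw' hlt hadj
    have hwP := hVP _ ((memW _).1 hw).1
    have hwP' := hVP _ ((memW _).1 hw').1
    have hw0 := ((memW _).1 hw).2
    have hw0' := ((memW _).1 hw').2
    have half : ∀ y ∈ P, 0 ≤ (y.1 - w.1) * (w'.2 - w.2) - (y.2 - w.2) * (w'.1 - w.1) := by
      have hcH : Convex ℝ {y : ℝ × ℝ | 0 ≤ (y.1 - w.1) * (w'.2 - w.2) - (y.2 - w.2) * (w'.1 - w.1)} := by
        intro y hy y' hy' a b ha hb hab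
        simp only [Set.mem_ofPred_eq] at hy hy' ⊢
        have hb' : b = 1 - a := by linarith
        subst hb'
        simp only [Prod.fst_add, Prod.snd_add, Prod.smul_fst, Prod.smul_snd, smul_eq_mul]
        have := add_nonneg (mul_nonneg ha hy) (mul_nonneg hb hy')
        linarith
      suffices hsub : ∀ u ∈ V, 0 ≤ (u.1 - w.1) * (w'.2 - w.2) - (u.2 - w.2) * (w'.1 - w.1) by
        intro y hy
        rw [hP] at hy
        exact convexHull_min (fun u hu => hsub u hu) hcH hy
      intro u hu
      have huP := hVP u hu
      by_contra hneg
      push Not at hneg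
      rcases lt_trichotomy u.2 w.2 with h | h | h
      · -- below
        have hd : 0 < w'.2 - u.2 := by linarith
        have hy := hconv huP hwP' (a := (w'.2 - w.2) / (w'.2 - u.2))
          (b := (w.2 - u.2) / (w'.2 - u.2)) (div_nonneg (by linarith) hd.le)
          (div_nonneg (by linarith) hd.le) (by field_simp; ring)
        have := left w hw _ hy (by simp; field_simp; ring)
        simp at this
        have h5 : (w'.2 - w.2) / (w'.2 - u.2) * u.1 + (w.2 - u.2) / (w'.2 - u.2) * w'.1
          = ((w'.2 - w.2) * u.1 + (w.2 - u.2) * w'.1) / (w'.2 - u.2) := by ring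
        rw [h5, le_div_iff₀ hd] at this
        linarith
      · have := left w hw u huP h
        rw [h] at hneg
        nlinarith
      · rcases lt_trichotomy u.2 w'.2 with h' | h' | h'
        · by_cases hu0 : u.1 < 0
          · rcases hadj u ((memW u).2 ⟨hu, hu0⟩) with h'' | h'' <;> linarith
          · push Not at hu0
            nlinarith [mul_nonneg hu0 (sub_pos.2 hlt).le, mul_pos (sub_pos.2 h') (neg_pos.2 hw0),
              mul_pos (sub_pos.2 h) (neg_pos.2 hw0')]
        · have := left w' hw' u huP h'
          rw [h'] at hneg
          nlinarith
        · have hd : 0 < u.2 - w.2 := by linarith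
          have hy := hconv huP hwP (a := (w'.2 - w.2) / (u.2 - w.2))
            (b := (u.2 - w'.2) / (u.2 - w.2)) (div_nonneg (by linarith) hd.le)
            (div_nonneg (by linarith) hd.le) (by field_simp; ring)
          have := left w' hw' _ hy (by simp; field_simp; ring)
          simp at this
          have h5 : (w'.2 - w.2) / (u.2 - w.2) * u.1 + (u.2 - w'.2) / (u.2 - w.2) * w.1
            = ((w'.2 - w.2) * u.1 + (u.2 - w'.2) * w.1) / (u.2 - w.2) := by ring
          rw [h5, le_div_iff₀ hd] at this
          linarith
    intro z hz
    have hzP : z ∈ P := hconv.segment_subset hwP hwP' hz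
    refine ⟨subset_closure hzP, fun hInter => ?_⟩
    obtain ⟨t, ht, ht'⟩ := ((ev_pos_le one_pos).and
      (ent_int (u := ((-1, 0) : ℝ × ℝ)) (w := 0) hInter).exists.choose_spec).exists
    have h1 := half _ (interior_subset ht')
    obtain ⟨a, b, ha, hb, hab, rfl⟩ := hz
    have hb' : b = 1 - a := by linarith
    subst hb'
    simp at h1
    nlinarith [mul_pos ht.1 (sub_pos.2 hlt)]
  have inn : ∀ w ∈ W, ∀ w' ∈ W, ∀ z ∈ segment ℝ w w', ∀ θ : ℝ, 0 < θ → θ ≤ 1 →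
      z + (θ, 0) ∈ interior P := by
    intro w hw w' hw' z hz θ h0 h1
    have hzP : z ∈ P := hconv.segment_subset (hVP _ ((memW _).1 hw).1) (hVP _ ((memW _).1 hw').1) hz
    have hcS : Convex ℝ {y : ℝ × ℝ | y.1 < 0 ∧ 0 < y.2 ∧ y.2 < 1} := by
      intro y hy y' hy' a b ha hb hab
      simp only [Set.mem_ofPred_eq] at hy hy' ⊢
      simp only [Prod.fst_add, Prod.snd_add, Prod.smul_fst, Prod.smul_snd, smul_eq_mul]
      exact ⟨(convex_Iio (0 : ℝ)) hy.1 hy'.1 ha hb hab,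
        (convex_Ioi (0 : ℝ)) hy.2.1 hy'.2.1 ha hb hab,
        (convex_Iio (1 : ℝ)) hy.2.2 hy'.2.2 ha hb hab⟩
    have hzS := hcS.segment_subset ⟨((memW _).1 hw).2, hWh w hw⟩ ⟨((memW _).1 hw').2, hWh w' hw'⟩ hz
    obtain ⟨z0, zh0, zh1⟩ := hzS
    have box : ∀ y : ℝ × ℝ, 0 < y.1 → y.1 < 1 → 0 < y.2 → y.2 < 1 → y ∈ interior P := by
      intro y a1 a2 a3 a4
      have ho : IsOpen (Set.Ioo (0 : ℝ) 1 ×ˢ Set.Ioo (0 : ℝ) 1) := isOpen_Ioo.prod isOpen_Ioo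
      refine interior_maximal (fun y hy => ?_) ho ⟨⟨a1, a2⟩, ⟨a3, a4⟩⟩
      exact hsq y.1 y.2 hy.1.1.le hy.1.2.le hy.2.1.le hy.2.2.le
    by_cases h : 0 < z.1 + θ
    · refine box _ ?_ ?_ ?_ ?_
      · simpa using h
      · simp; linarith
      · simpa using zh0
      · simpa using zh1
    · push Not at h
      have h2 : z + (1/2 - z.1, 0) ∈ interior P := by
        refine box _ ?_ ?_ ?_ ?_
        · simp
        · simp; norm_num
        · simpa using zh0
        · simpa using zh1
      have hd : 0 < 1/2 - z.1 := by linarith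
      have := int_ray hconv (t := θ / (1/2 - z.1)) (by positivity)
        (by rw [div_le_one hd]; linarith) hzP h2
      convert this using 1
      ext
      · simp only [Prod.fst_add, Prod.smul_fst, smul_eq_mul]
        rw [div_mul_cancel₀ _ hd.ne']
      · simp
  -- sort
  set H := W.image Prod.snd with hH
  have hHc : 4 ≤ H.card := by rw [hH, Finset.card_image_of_injOn inj]; exact hW4
  set e := H.orderEmbOfFin rfl with he
  have hn : 0 < H.card := by omega
  have wex : ∀ i, ∃ w ∈ W, w.2 = e i := by
    intro i
    have : e i ∈ H := Finset.orderEmbOfFin_mem H rfl i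
    exact Finset.mem_image.1 this
  have range : ∀ u ∈ W, ∃ i, e i = u.2 := by
    intro u hu
    have h1 : u.2 ∈ (H : Set ℝ) := by
      rw [hH]; exact Finset.mem_coe.2 (Finset.mem_image_of_mem _ hu)
    rw [← Finset.range_orderEmbOfFin H rfl] at h1
    exact h1
  obtain ⟨w0, hw0, e0⟩ := wex ⟨0, by omega⟩
  obtain ⟨w1, hw1, e1⟩ := wex ⟨1, by omega⟩
  obtain ⟨w2, hw2, e2⟩ := wex ⟨2, by omega⟩
  obtain ⟨w3, hw3, e3⟩ := wex ⟨3, by omega⟩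
  have l01 : w0.2 < w1.2 := by rw [e0, e1]; exact e.strictMono (by simp)
  have l12 : w1.2 < w2.2 := by rw [e1, e2]; exact e.strictMono (by simp)
  have l23 : w2.2 < w3.2 := by rw [e2, e3]; exact e.strictMono (by simp)
  have hseg : ∀ w w' z : ℝ × ℝ, w.2 < w'.2 → z ∈ segment ℝ w w' → w.2 ≤ z.2 ∧ z.2 ≤ w'.2 := by
    rintro w w' z hlt ⟨a, b, ha, hb, hab, rfl⟩
    have hb' : b = 1 - a := by linarith
    subst hb'
    simp
    constructor <;> nlinarith
  refine ⟨w0, ((memW _).1 hw0).1, w1, ((memW _).1 hw1).1, w2, ((memW _).1 hw2).1, w3,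
    ((memW _).1 hw3).1, ?_, ?_, edge w0 hw0 w1 hw1 l01 ?_, edge w2 hw2 w3 hw3 l23 ?_, ?_,
    inn w0 hw0 w1 hw1, inn w2 hw2 w3 hw3⟩
  · rintro rfl; exact lt_irrefl _ l01
  · rintro rfl; exact lt_irrefl _ l23
  · intro u hu
    obtain ⟨i, hi⟩ := range u hu
    rw [← hi, e0, e1, e.le_iff_le, e.le_iff_le, Fin.le_def, Fin.le_def]
    simp only; omega
  · intro u hu
    obtain ⟨i, hi⟩ := range u hu
    rw [← hi, e2, e3, e.le_iff_le, e.le_iff_le, Fin.le_def, Fin.le_def]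
    simp only; omega
  · rw [Set.disjoint_left]
    intro z h1 h2
    have := (hseg _ _ _ l01 h1).2
    have := (hseg _ _ _ l23 h2).1
    linarith

lemma two_edges {P : Set (ℝ × ℝ)} {V : Finset (ℝ × ℝ)} (hP : IsConvexPolygon P V) {c : ℝ × ℝ}
    (hB : Body P c) (hV : V.card = 12) {a b : ℝ × ℝ} (hE : IsEdge P V a b) :
    ∃ p q r s, IsEdge P V p q ∧ IsEdge P V r s ∧ Disjoint (segment ℝ p q) (segment ℝ r s) ∧
      (∀ z ∈ segment ℝ p q, ∀ θ : ℝ, 0 < θ → θ ≤ 1 → z + θ • (b - a) ∈ interior P) ∧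
      (∀ z ∈ segment ℝ r s, ∀ θ : ℝ, 0 < θ → θ ≤ 1 → z + θ • (b - a) ∈ interior P) := by
  classical
  have hVP : ∀ v ∈ V, v ∈ P := fun v hv => (hP.2.1 v hv).1
  obtain ⟨f, hab, hfi, hfP⟩ := edge_supp hB hVP hE
  have hfc := hfi c hB.cint
  set d := c + c - b - a with hd
  have hfd : f d < 0 := by rw [hd, map_sub, map_sub, map_add]; linarith
  have hba : b - a ≠ 0 := sub_ne_zero.2 hE.2.2.1.symm
  have hfba : f (b - a) = 0 := by rw [map_sub]; linarith
  let L0 : (ℝ × ℝ) →ₗ[ℝ] (ℝ × ℝ) :=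
    (LinearMap.fst ℝ ℝ ℝ).smulRight (b - a) + (LinearMap.snd ℝ ℝ ℝ).smulRight d
  have hL0 : ∀ y, L0 y = y.1 • (b - a) + y.2 • d := fun y => rfl
  have hinj : Function.Injective L0 := by
    rw [← LinearMap.ker_eq_bot, LinearMap.ker_eq_bot']
    intro y hy
    rw [hL0] at hy
    have h1 := congrArg f hy
    rw [map_add, map_smul, map_smul, hfba, map_zero] at h1
    simp [hfd.ne] at h1
    rw [h1] at hy
    simp [hba] at hy
    exact Prod.ext hy h1
  let L := LinearEquiv.ofInjectiveEndo L0 hinj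
  let T : (ℝ × ℝ) ≃ᵃ[ℝ] (ℝ × ℝ) := L.toAffineEquiv.trans (AffineEquiv.constVAdd ℝ (ℝ × ℝ) a)
  have hT : ∀ y, T y = a + (y.1 • (b - a) + y.2 • d) := fun y => rfl
  let Th := T.toHomeomorphOfFiniteDimensional
  have hTh : ∀ y, Th y = T y := fun y => rfl
  set P0 := Th ⁻¹' P with hP0
  set V0 := V.preimage Th Th.injective.injOn with hV0
  have memV0 : ∀ y, y ∈ V0 ↔ T y ∈ V := by intro y; simp [hV0, hTh]
  have himV : (T : ℝ × ℝ → ℝ × ℝ) '' (V0 : Set (ℝ × ℝ)) = V := by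
    ext y; constructor
    · rintro ⟨z, hz, rfl⟩; exact (memV0 z).1 hz
    · intro hy; exact ⟨T.symm y, (memV0 _).2 (by simpa using hy), by simp⟩
  have himP : (T : ℝ × ℝ → ℝ × ℝ) '' P0 = P := Th.toEquiv.image_preimage P
  have hInter : ∀ y, y ∈ interior P0 ↔ T y ∈ interior P := by
    intro y
    rw [hP0, ← Th.preimage_interior]; rfl
  have hfr : ∀ y, y ∈ frontier P0 ↔ T y ∈ frontier P := by
    intro y
    rw [hP0, ← Th.preimage_frontier]; rfl
  have hseg : ∀ p q, segment ℝ (T p) (T q) = T '' segment ℝ p q := fun p q =>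
    (image_segment ℝ (T : (ℝ × ℝ) →ᵃ[ℝ] (ℝ × ℝ)) p q).symm
  have hlin : ∀ (y z : ℝ × ℝ) (α β : ℝ), α + β = 1 → T (α • y + β • z) = α • T y + β • T z := by
    intro y z α β h
    have : β = 1 - α := by linarith
    subst this
    simp only [hT, Prod.fst_add, Prod.snd_add, Prod.smul_fst, Prod.smul_snd, smul_eq_mul]
    module
  have c1 : P0 = convexHull ℝ (V0 : Set (ℝ × ℝ)) := by
    apply T.injective.image_injective
    have := AffineMap.image_convexHull (T : (ℝ × ℝ) →ᵃ[ℝ] (ℝ × ℝ)) (V0 : Set (ℝ × ℝ))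
    simp only [AffineEquiv.coe_toAffineMap] at this
    rw [himP, this, himV]; exact hP.1
  have c2 : ∀ v ∈ V0, v ∈ Set.extremePoints ℝ P0 := by
    intro v hv
    have h1 := mem_extremePoints.1 (hP.2.1 _ ((memV0 v).1 hv))
    refine mem_extremePoints.2 ⟨h1.1, ?_⟩
    intro y1 hy1 y2 hy2 ho
    have := h1.2 _ hy1 _ hy2 (by
      obtain ⟨α, β, hα, hβ, hαβ, h⟩ := ho
      exact ⟨α, β, hα, hβ, hαβ, by rw [← h]; exact (hlin _ _ _ _ hαβ).symm⟩)
    exact ⟨T.injective this.1, T.injective this.2⟩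
  have c3 : V0.card = 12 := by
    rw [← hV, ← Finset.card_image_of_injective V0 T.injective]
    congr 1
    apply Finset.coe_injective
    rw [Finset.coe_image]; exact himV
  have c4 : ∀ p ∈ P0, ((1, 1) : ℝ × ℝ) - p ∈ P0 := by
    intro p hp
    have := hB.sym _ hp
    change T _ ∈ P
    convert this using 1
    rw [hTh, hT, hT]
    simp only [Prod.fst_sub, Prod.snd_sub, hd]
    module
  have c5 : ((0, 0) : ℝ × ℝ) ∈ V0 := by
    rw [memV0, hT]; simpa using hE.1
  have c6 : ((1, 0) : ℝ × ℝ) ∈ V0 := by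
    rw [memV0, hT]; simpa using hE.2.1
  have c7 : ∀ p ∈ P0, 0 ≤ p.2 := by
    intro p hp
    have := hfP _ hp
    rw [hTh, hT, map_add, map_add, map_smul, map_smul, hfba] at this
    simp at this
    nlinarith
  obtain ⟨p, hp, q, hq, r, hr, s, hs, hpq, hrs, g1, g2, g3, g4, g5⟩ := core c1 c2 c3 c4 c5 c6 c7
  have tr : ∀ p q, segment ℝ p q ⊆ frontier P0 → segment ℝ (T p) (T q) ⊆ frontier P := by
    intro p q h
    rw [hseg]
    rintro _ ⟨z, hz, rfl⟩
    exact (hfr z).1 (h hz)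
  have tr2 : ∀ p q, (∀ z ∈ segment ℝ p q, ∀ θ : ℝ, 0 < θ → θ ≤ 1 → z + (θ, 0) ∈ interior P0) →
      ∀ z ∈ segment ℝ (T p) (T q), ∀ θ : ℝ, 0 < θ → θ ≤ 1 → z + θ • (b - a) ∈ interior P := by
    intro p q h
    rw [hseg]
    rintro _ ⟨z, hz, rfl⟩ θ h0 h1
    have := (hInter _).1 (h z hz θ h0 h1)
    convert this using 1
    rw [hT, hT]
    simp only [Prod.fst_add, Prod.snd_add]
    module
  refine ⟨T p, T q, T r, T s, ⟨(memV0 _).1 hp, (memV0 _).1 hq, T.injective.ne hpq, tr p q g1⟩,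
    ⟨(memV0 _).1 hr, (memV0 _).1 hs, T.injective.ne hrs, tr r s g2⟩, ?_, tr2 p q g4, tr2 r s g5⟩
  rw [hseg, hseg, Set.disjoint_image_iff T.injective]
  exact g3

end Dodeca

/-- Let `P` be a centrally symmetric convex dodecagon and `P + X` a `k`-fold translative
tiling. If a vertex `v ∈ V + X` lies in the relative interior of an edge of the translate
`P + x j` with endpoints `v'` and `v∗`, then there are four pairwise distinct points of
`X` (given by indices `i₁, i₂, i₃, i₄`) such that `v' ∈ ∂(P) + x i` and `v ∈ int(P) + x i`
for `i = i₁, i₂`, and `vs ∈ ∂(P) + x i` and `v ∈ int(P) + x i` for `i = i₃, i₄`; in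
particular at least `4` translates of `int(P)` contain `v`. -/
theorem dodecagon_four_interior_translates (P : Set (ℝ × ℝ)) (V : Finset (ℝ × ℝ))
    (hP : IsConvexPolygon P V) (hV : V.card = 12) (hsym : IsCentrallySymmetric P)
    (k : ℕ) (hk : 0 < k) (ι : Type) (x : ι → ℝ × ℝ)
    (htile : IsKFoldTranslativeTiling P x k)
    (v : ℝ × ℝ) (jv : ι) (hv : v - x jv ∈ V)
    (v' vs : ℝ × ℝ) (j : ι) (hG : IsEdge P V (v' - x j) (vs - x j))
    (hvG : v - x j ∈ openSegment ℝ (v' - x j) (vs - x j)) :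
    ∃ i₁ i₂ i₃ i₄ : ι,
      x i₁ ≠ x i₂ ∧ x i₁ ≠ x i₃ ∧ x i₁ ≠ x i₄ ∧
      x i₂ ≠ x i₃ ∧ x i₂ ≠ x i₄ ∧ x i₃ ≠ x i₄ ∧
      (v' - x i₁ ∈ frontier P ∧ v - x i₁ ∈ interior P) ∧
      (v' - x i₂ ∈ frontier P ∧ v - x i₂ ∈ interior P) ∧
      (vs - x i₃ ∈ frontier P ∧ v - x i₃ ∈ interior P) ∧
      (vs - x i₄ ∈ frontier P ∧ v - x i₄ ∈ interior P) := by
  classical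
  obtain ⟨c, hB⟩ := Dodeca.body_of hP hsym
  have hG' : IsEdge P V (vs - x j) (v' - x j) :=
    ⟨hG.2.1, hG.1, hG.2.2.1.symm, by rw [segment_symm]; exact hG.2.2.2⟩
  obtain ⟨p, q, r, s, h1, h2, hd, h3, h4⟩ := Dodeca.two_edges hP hB hV hG
  obtain ⟨p', q', r', s', h1', h2', hd', h3', h4'⟩ := Dodeca.two_edges hP hB hV hG'
  obtain ⟨i₁, e1⟩ := Dodeca.on_edge hP hB htile hG.1 h1
  obtain ⟨i₂, e2⟩ := Dodeca.on_edge hP hB htile hG.1 h2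
  obtain ⟨i₃, e3⟩ := Dodeca.on_edge hP hB htile hG.2.1 h1'
  obtain ⟨i₄, e4⟩ := Dodeca.on_edge hP hB htile hG.2.1 h2'
  obtain ⟨a, b, ha, hb, hab, hv⟩ := hvG
  have hva : v = a • v' + b • vs := by
    have h5 : v = a • (v' - x j) + b • (vs - x j) + x j := by rw [hv]; abel
    have hb' : b = 1 - a := by linarith
    rw [h5, hb']; module
  have f1 := h1.2.2.2 e1
  have f2 := h2.2.2.2 e2
  have f3 := h1'.2.2.2 e3
  have f4 := h2'.2.2.2 e4
  have eqb : ∀ i, v - x i = v' - x i + b • ((vs - x j) - (v' - x j)) := by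
    intro i
    have ha' : a = 1 - b := by linarith
    rw [hva, ha']; module
  have eqa : ∀ i, v - x i = vs - x i + a • ((v' - x j) - (vs - x j)) := by
    intro i
    have hb' : b = 1 - a := by linarith
    rw [hva, hb']; module
  have eq1 : ∀ i, vs - x i = v' - x i + (1 : ℝ) • ((vs - x j) - (v' - x j)) := by
    intro i; module
  have n1 : vs - x i₁ ∈ interior P := by
    rw [eq1]; exact h3 _ e1 1 one_pos le_rfl
  have n2 : vs - x i₂ ∈ interior P := by
    rw [eq1]; exact h4 _ e2 1 one_pos le_rfl
  refine ⟨i₁, i₂, i₃, i₄, ?_, ?_, ?_, ?_, ?_, ?_, ⟨f1, ?_⟩, ⟨f2, ?_⟩, ⟨f3, ?_⟩, ⟨f4, ?_⟩⟩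
  · intro h; rw [← h] at e2; exact Set.disjoint_left.1 hd e1 e2
  · intro h; rw [← h] at f3; exact f3.2 n1
  · intro h; rw [← h] at f4; exact f4.2 n1
  · intro h; rw [← h] at f3; exact f3.2 n2
  · intro h; rw [← h] at f4; exact f4.2 n2
  · intro h; rw [← h] at e4; exact Set.disjoint_left.1 hd' e3 e4
  · rw [eqb]; exact h3 _ e1 b hb (by linarith)
  · rw [eqb]; exact h4 _ e2 b hb (by linarith)
  · rw [eqa]; exact h3' _ e3 a ha (by linarith)
  · rw [eqa]; exact h4' _ e4 a ha (by linarith)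
end

section
/- Let P be a centrally symmetric convex tetradecagon (a convex polygon with exactly 14 vertices, symmetric about a point). If P admits a k-fold translative tiling of the plane for some positive integer k, then k ≥ 6; that is, τ(P) ≥ 6. -/
open Pointwise

namespace Tetra

/-- planar cross product -/
def cr (u y : ℝ × ℝ) : ℝ := u.1 * y.2 - u.2 * y.1

lemma cr_add (u a b : ℝ × ℝ) : cr u (a + b) = cr u a + cr u b := by simp [cr]; ring
lemma cr_sub (u a b : ℝ × ℝ) : cr u (a - b) = cr u a - cr u b := by simp [cr]; ring
lemma cr_neg (u a : ℝ × ℝ) : cr u (-a) = - cr u a := by simp [cr]; ring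
lemma cr_smul (u : ℝ × ℝ) (t : ℝ) (a : ℝ × ℝ) : cr u (t • a) = t * cr u a := by simp [cr]; ring
lemma cr_self (u : ℝ × ℝ) : cr u u = 0 := by simp [cr]; ring
lemma cr_zero (u : ℝ × ℝ) : cr u 0 = 0 := by simp [cr]
lemma cr_zero_left (u : ℝ × ℝ) : cr 0 u = 0 := by simp [cr]
lemma cr_smul_left (u : ℝ × ℝ) (t : ℝ) (a : ℝ × ℝ) : cr (t • u) a = t * cr u a := by
  simp [cr]; ring
lemma cr_comm (u a : ℝ × ℝ) : cr u a = - cr a u := by simp [cr]; ring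

lemma par_of_cr {n d : ℝ × ℝ} (hn : n ≠ 0) (h : cr n d = 0) : ∃ t : ℝ, d = t • n := by
  obtain ⟨a, b⟩ := n
  obtain ⟨c, e⟩ := d
  simp only [cr] at h
  by_cases ha : a = 0
  · have hb : b ≠ 0 := by
      rintro rfl; exact hn (by simp [ha])
    refine ⟨e / b, ?_⟩
    subst ha
    have : c = 0 := by
      have : b * c = 0 := by linarith
      rcases mul_eq_zero.1 this with h | h
      · exact absurd h hb
      · exact h
    ext
    · simp [this]
    · simp; field_simp
  · refine ⟨c / a, ?_⟩
    ext
    · simp; field_simp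
    · simp; field_simp; linarith

/-- the standing hypotheses on the polygon, centred at the origin -/
structure Poly (P : Set (ℝ × ℝ)) (V : Finset (ℝ × ℝ)) : Prop where
  hull : P = convexHull ℝ (V : Set (ℝ × ℝ))
  ext : ∀ v ∈ V, v ∉ convexHull ℝ ((V : Set (ℝ × ℝ)) \ {v})
  neg : ∀ v ∈ V, -v ∈ V
  int0 : (0 : ℝ × ℝ) ∈ interior P
  card : V.card = 14

variable {P : Set (ℝ × ℝ)} {V : Finset (ℝ × ℝ)}

lemma Poly.conv (h : Poly P V) : Convex ℝ P := h.hull ▸ convex_convexHull ℝ _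
lemma Poly.compact (h : Poly P V) : IsCompact P := by
  rw [h.hull]; exact Set.Finite.isCompact_convexHull (𝕜 := ℝ) V.finite_toSet
lemma Poly.closed (h : Poly P V) : IsClosed P := h.compact.isClosed
lemma Poly.subV (h : Poly P V) {v : ℝ × ℝ} (hv : v ∈ V) : v ∈ P := by
  rw [h.hull]; exact subset_convexHull ℝ _ hv
lemma Poly.negP (h : Poly P V) {q : ℝ × ℝ} (hq : q ∈ P) : -q ∈ P := by
  have : convexHull ℝ (V : Set (ℝ × ℝ)) ⊆ -P := by
    apply convexHull_min
    · intro v hv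
      exact h.subV (h.neg v hv)
    · exact h.conv.neg
  rw [h.hull] at hq
  exact this hq
lemma Poly.negP_iff (h : Poly P V) {q : ℝ × ℝ} : -q ∈ P ↔ q ∈ P :=
  ⟨fun hq => by simpa using h.negP hq, h.negP⟩
lemma Poly.negI (h : Poly P V) {q : ℝ × ℝ} (hq : q ∈ interior P) : -q ∈ interior P := by
  have this : q ∈ (Homeomorph.neg (ℝ × ℝ)) ⁻¹' interior P := by
    have e2 := (Homeomorph.neg (ℝ × ℝ)).preimage_interior P
    have h2 : (Homeomorph.neg (ℝ × ℝ)) ⁻¹' P = P := by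
      ext x; simp [h.negP_iff]
    rw [h2] at e2
    rw [e2]; exact hq
  exact this

/-- combos of an interior point with a point of `P` -/
lemma Poly.combo (h : Poly P V) {p q : ℝ × ℝ} (hp : p ∈ interior P) (hq : q ∈ P) {a b : ℝ}
    (ha : 0 < a) (hb : 0 ≤ b) (hab : a + b = 1) : a • p + b • q ∈ interior P :=
  h.conv.combo_interior_self_mem_interior hp hq ha hb hab

/-- inward directions -/
def D (P : Set (ℝ × ℝ)) (u : ℝ × ℝ) : Set (ℝ × ℝ) :=
  {q | q ∈ P ∧ ∃ ε : ℝ, 0 < ε ∧ q + ε • u ∈ interior P}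

lemma Poly.D_small (h : Poly P V) {q u : ℝ × ℝ} (hq : q ∈ D P u) :
    ∃ ε : ℝ, 0 < ε ∧ ∀ δ, 0 < δ → δ ≤ ε → q + δ • u ∈ interior P := by
  obtain ⟨hq, ε, he, hi⟩ := hq
  refine ⟨ε, he, fun δ hd hde => ?_⟩
  have := h.combo hi hq (a := δ / ε) (b := 1 - δ / ε) (by positivity)
    (by rw [sub_nonneg, div_le_one he]; exact hde) (by ring)
  convert this using 1
  ext <;> simp <;> field_simp <;> ring

lemma Poly.int_sub_D (_h : Poly P V) {q : ℝ × ℝ} (u : ℝ × ℝ) (hq : q ∈ interior P) : q ∈ D P u := by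
  refine ⟨interior_subset hq, ?_⟩
  have hc : Filter.Tendsto (fun ε : ℝ => q + ε • u) (nhdsWithin 0 (Set.Ioi 0)) (nhds q) := by
    have : Filter.Tendsto (fun ε : ℝ => q + ε • u) (nhds 0) (nhds (q + (0 : ℝ) • u)) :=
      Continuous.tendsto (by fun_prop) 0
    simp only [zero_smul, add_zero] at this
    exact this.mono_left nhdsWithin_le_nhds
  have h1 := hc.eventually (isOpen_interior.mem_nhds hq)
  obtain ⟨ε, h2, h3⟩ := (h1.and self_mem_nhdsWithin).exists
  exact ⟨ε, h3, h2⟩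

lemma Poly.D_neg (h : Poly P V) {q u : ℝ × ℝ} (hq : q ∈ D P u) : -q ∈ D P (-u) := by
  obtain ⟨hq, ε, he, hi⟩ := hq
  refine ⟨h.negP hq, ε, he, ?_⟩
  have := h.negI hi
  rwa [neg_add, ← smul_neg] at this

/-- going in along `u` and staying in `P` along `-u` forces interior -/
lemma Poly.int_of_two (h : Poly P V) {q u : ℝ × ℝ} (hq : q ∈ D P u) {δ : ℝ} (hd : 0 < δ)
    (h2 : q - δ • u ∈ P) : q ∈ interior P := by
  obtain ⟨hq, ε, he, hi⟩ := hq
  have := h.combo hi h2 (a := δ / (δ + ε)) (b := ε / (δ + ε)) (by positivity) (by positivity)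
    (by field_simp)
  convert this using 1
  ext <;> simp <;> field_simp <;> ring

lemma Poly.not_both (h : Poly P V) {q u : ℝ × ℝ} (hq : q ∈ D P u) (h2 : q ∈ D P (-u)) :
    q ∈ interior P := by
  obtain ⟨hq', ε, he, hi⟩ := h2
  refine h.int_of_two hq he (interior_subset ?_)
  convert hi using 1
  rw [smul_neg, sub_eq_add_neg]

/-- an interior point does not maximise a nonzero functional -/
lemma Poly.int_lt (h : Poly P V) {q n : ℝ × ℝ} {M : ℝ} (hM : ∀ y ∈ P, cr n y ≤ M) (hn : n ≠ 0)
    (hq : q ∈ interior P) : cr n q < M := by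
  obtain ⟨_, ε, he, hi⟩ := h.int_sub_D (-n.2, n.1) hq
  have h1 := hM _ (interior_subset hi)
  rw [cr_add, cr_smul] at h1
  have : 0 < cr n (-n.2, n.1) := by
    simp only [cr]
    have : n.1 ≠ 0 ∨ n.2 ≠ 0 := by
      by_contra hc
      push Not at hc
      exact hn (Prod.ext hc.1 hc.2)
    rcases this with h | h <;> nlinarith [sq_nonneg n.1, sq_nonneg n.2, sq_pos_of_ne_zero h]
  nlinarith [mul_pos he this]

/-- `w` is the unique maximiser of `cr u` -/
def Gen (V : Finset (ℝ × ℝ)) (u w : ℝ × ℝ) : Prop :=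
  w ∈ V ∧ ∀ y ∈ V, y ≠ w → cr u y < cr u w

lemma Poly.gen_max (h : Poly P V) {u w : ℝ × ℝ} (g : Gen V u w) {q : ℝ × ℝ} (hq : q ∈ P) :
    cr u q < cr u w ∨ q = w := by
  have : convexHull ℝ (V : Set (ℝ × ℝ)) ⊆ {q | cr u q < cr u w ∨ q = w} := by
    apply convexHull_min
    · intro v hv
      by_cases hvw : v = w
      · exact Or.inr hvw
      · exact Or.inl (g.2 v hv hvw)
    · intro x hx y hy a b ha hb hab
      simp only [Set.mem_ofPred_eq] at *
      have e : cr u w = a * cr u w + b * cr u w := by rw [← add_mul, hab, one_mul]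
      rw [cr_add, cr_smul, cr_smul]
      rcases ha.eq_or_lt with rfl | ha'
      · simp at hab; subst hab; simpa using hy
      rcases hb.eq_or_lt with rfl | hb'
      · simp at hab; subst hab; simpa using hx
      rcases hx with hx | rfl
      · left
        have : cr u y ≤ cr u w := by
          rcases hy with hy | rfl
          · exact hy.le
          · rfl
        nlinarith
      · rcases hy with hy | rfl
        · left; nlinarith
        · right; rw [← add_smul, hab, one_smul]
  rw [h.hull] at hq
  exact this hq

lemma Poly.three (h : Poly P V) (a b c d : ℝ × ℝ) : ∃ y ∈ V, y ≠ a ∧ y ≠ b ∧ y ≠ c ∧ y ≠ d := by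
  by_contra hc
  push Not at hc
  have : V ⊆ {a, b, c, d} := by
    intro y hy
    simp only [Finset.mem_insert, Finset.mem_singleton]
    by_contra h'
    push Not at h'
    exact h'.2.2.2 (hc y hy h'.1 h'.2.1 h'.2.2.1)
  have h1 := Finset.card_le_card this
  have h2 : ({a, b, c, d} : Finset (ℝ × ℝ)).card ≤ 4 := Finset.card_le_four
  have := h.card
  omega

/-- every vertex is exposed -/
lemma Poly.exposed (h : Poly P V) {w : ℝ × ℝ} (hw : w ∈ V) : ∃ u, Gen V u w := by
  have hcl : IsClosed (convexHull ℝ ((V : Set (ℝ × ℝ)) \ {w})) :=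
    (Set.Finite.isCompact_convexHull (𝕜 := ℝ) (V.finite_toSet.subset Set.sdiff_subset)).isClosed
  obtain ⟨f, s, h1, h2⟩ := geometric_hahn_banach_closed_point (convex_convexHull ℝ _) hcl (h.ext w hw)
  have hf : ∀ y : ℝ × ℝ, f y = y.1 * f (1, 0) + y.2 * f (0, 1) := by
    intro y
    have : y = y.1 • ((1 : ℝ), (0 : ℝ)) + y.2 • ((0 : ℝ), (1 : ℝ)) := by ext <;> simp
    conv_lhs => rw [this]
    rw [map_add, map_smul, map_smul]; rfl
  refine ⟨(f (0, 1), -f (1, 0)), hw, fun y hy hyw => ?_⟩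
  have h3 := h1 y (subset_convexHull ℝ _ ⟨hy, hyw⟩)
  have h4 := h3.trans h2
  rw [hf y, hf w] at h4
  simp only [cr]
  linarith

lemma Poly.gen_ne (h : Poly P V) {u w : ℝ × ℝ} (g : Gen V u w) : u ≠ 0 := by
  rintro rfl
  obtain ⟨y, hy, hyw, _⟩ := h.three w w w w
  have := g.2 y hy hyw
  simp [cr_zero_left] at this

lemma Poly.not_int (h : Poly P V) {v : ℝ × ℝ} (hv : v ∈ V) : v ∉ interior P := by
  intro hi
  obtain ⟨u, g⟩ := h.exposed hv
  have := h.int_lt (M := cr u v) (n := u) (fun y hy => by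
    rcases h.gen_max g hy with h | rfl
    · exact h.le
    · rfl) (h.gen_ne g) hi
  exact lt_irrefl _ this

/-- main dichotomy: along a non-supporting line exactly one direction goes inside -/
lemma Poly.dich (h : Poly P V) {n p q : ℝ × ℝ} (hn : n ≠ 0) (hp : p ∈ P)
    (hq : q ∈ P) (hqi : q ∉ interior P) (h1 : cr n q < cr n p) (h2 : - cr n p < cr n q) :
    q ∈ D P n ∨ q ∈ D P (-n) := by
  have hM : 0 < cr n p := by linarith
  set l := cr n q / cr n p with hl
  have hl1 : l < 1 := by rw [hl, div_lt_one hM]; exact h1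
  have hl2 : -1 < l := by rw [hl, lt_div_iff₀ hM]; linarith
  have hi : l • p ∈ interior P := by
    rcases le_or_gt 0 l with h0 | h0
    · have := h.combo h.int0 hp (a := 1 - l) (b := l) (by linarith) h0 (by ring)
      simpa using this
    · have := h.combo h.int0 (h.negP hp) (a := 1 + l) (b := -l) (by linarith) (by linarith) (by ring)
      simpa using this
  obtain ⟨t, ht⟩ := par_of_cr (d := l • p - q) hn (by
    rw [cr_sub, cr_smul, hl]; field_simp; ring)
  have e : l • p = q + t • n := by rw [← ht]; abel
  rw [e] at hi
  rcases lt_trichotomy t 0 with h0 | h0 | h0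
  · right
    refine ⟨hq, -t, by linarith, ?_⟩
    simpa using hi
  · subst h0; simp at hi; exact absurd hi hqi
  · exact Or.inl ⟨hq, t, h0, hi⟩

lemma Poly.gen_not_D (h : Poly P V) {u w : ℝ × ℝ} (g : Gen V u w) {q : ℝ × ℝ}
    (hq : cr u q = cr u w ∨ cr u q = - cr u w) : q ∉ D P u := by
  rintro ⟨hP, ε, he, hi⟩
  have hmax : ∀ y ∈ P, cr u y ≤ cr u w := fun y hy => by
    rcases h.gen_max g hy with h | rfl
    · exact h.le
    · rfl
  have h1 := h.int_lt hmax (h.gen_ne g) hi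
  have h2 := h.int_lt hmax (h.gen_ne g) (h.negI hi)
  rw [cr_neg] at h2
  rw [cr_add, cr_smul, cr_self] at h1 h2
  rcases hq with h | h <;> linarith

/-- for a generic direction: boundary points other than `±w` -/
lemma Poly.gen_dich (h : Poly P V) {u w : ℝ × ℝ} (g : Gen V u w) {q : ℝ × ℝ}
    (hq : q ∈ P) (hqi : q ∉ interior P) (h1 : q ≠ w) (h2 : q ≠ -w) :
    q ∈ D P u ∨ q ∈ D P (-u) := by
  apply h.dich (h.gen_ne g) (h.subV g.1) hq hqi
  · exact (h.gen_max g hq).resolve_right h1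
  · have := (h.gen_max g (h.negP hq)).resolve_right (fun hc => h2 (by rw [← hc, neg_neg]))
    rw [cr_neg] at this; linarith

/-- generic directions leave no tangency -/
lemma Poly.gen_out (h : Poly P V) {u w : ℝ × ℝ} (g : Gen V u w) {q : ℝ × ℝ} (hq : q ∈ P)
    (hD : q ∉ D P u) {ε : ℝ} (he : 0 < ε) : q + ε • u ∉ P := by
  intro hc
  have hqi : q ∉ interior P := fun hi => hD (h.int_sub_D u hi)
  have hu := h.gen_ne g
  by_cases h1 : q = w
  · have := h.gen_max g hc
    rw [cr_add, cr_smul, cr_self, h1] at this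
    rcases this with h | h
    · simp at h
    · simp [he.ne', hu] at h
  by_cases h2 : q = -w
  · have := h.gen_max g (h.negP hc)
    rw [cr_neg, cr_add, cr_smul, cr_self, h2, cr_neg] at this
    rcases this with h | h
    · simp at h
    · simp [he.ne', hu] at h
  rcases h.gen_dich g hq hqi h1 h2 with h3 | h3
  · exact hD h3
  · apply hqi
    refine h.int_of_two h3 he ?_
    simpa using hc

/-- `w z` is an edge -/
def Adj (V : Finset (ℝ × ℝ)) (w z : ℝ × ℝ) : Prop :=
  w ∈ V ∧ z ∈ V ∧ w ≠ z ∧ ∃ n, cr n w = cr n z ∧ ∀ y ∈ V, y ≠ w → y ≠ z → cr n y < cr n w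

lemma Adj.symm {w z : ℝ × ℝ} (a : Adj V w z) : Adj V z w := by
  obtain ⟨h1, h2, h3, n, h4, h5⟩ := a
  exact ⟨h2, h1, h3.symm, n, h4.symm, fun y hy a b => h4 ▸ h5 y hy b a⟩

lemma Poly.adj_neg (h : Poly P V) {w z : ℝ × ℝ} (a : Adj V w z) : Adj V (-w) (-z) := by
  obtain ⟨h1, h2, h3, n, h4, h5⟩ := a
  refine ⟨h.neg _ h1, h.neg _ h2, by simpa using h3, -n, ?_, fun y hy a b => ?_⟩
  · simp [cr] at *; linarith
  · have := h5 (-y) (h.neg _ hy) (fun hc => a (by rw [← hc, neg_neg])) (fun hc => b (by rw [← hc, neg_neg]))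
    simp [cr] at *; linarith

/-- the normal of an edge can be taken to be `± (z - w)`; basic facts -/
lemma Poly.adj_max (h : Poly P V) {w z n : ℝ × ℝ} (hw : w ∈ V) (hz : z ∈ V) (e : cr n w = cr n z)
    (hn : ∀ y ∈ V, y ≠ w → y ≠ z → cr n y < cr n w) {q : ℝ × ℝ} (hq : q ∈ P) :
    cr n q < cr n w ∨ q ∈ segment ℝ w z := by
  have : convexHull ℝ (V : Set (ℝ × ℝ)) ⊆ {q | cr n q < cr n w ∨ q ∈ segment ℝ w z} := by
    apply convexHull_min
    · intro v hv
      by_cases hvw : v = w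
      · right; subst hvw; exact left_mem_segment ℝ _ _
      by_cases hvz : v = z
      · right; subst hvz; exact right_mem_segment ℝ _ _
      · exact Or.inl (hn v hv hvw hvz)
    · have hseg : ∀ q ∈ segment ℝ w z, cr n q = cr n w := by
        rintro q ⟨a, b, ha, hb, hab, rfl⟩
        rw [cr_add, cr_smul, cr_smul, ← e, ← add_mul, hab, one_mul]
      intro x hx y hy a b ha hb hab
      simp only [Set.mem_ofPred_eq] at *
      have e : cr n w = a * cr n w + b * cr n w := by rw [← add_mul, hab, one_mul]
      rcases ha.eq_or_lt with rfl | ha'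
      · simp at hab; subst hab; simpa using hy
      rcases hb.eq_or_lt with rfl | hb'
      · simp at hab; subst hab; simpa using hx
      rcases hx with hx | hx
      · left
        rw [cr_add, cr_smul, cr_smul]
        have : cr n y ≤ cr n w := by
          rcases hy with hy | hy
          · exact hy.le
          · exact (hseg y hy).le
        nlinarith
      · rcases hy with hy | hy
        · left
          rw [cr_add, cr_smul, cr_smul]
          have := hseg x hx
          nlinarith
        · right; exact convex_segment w z hx hy ha hb hab
  rw [h.hull] at hq
  exact this hq

lemma Poly.adj_normal (h : Poly P V) {w z : ℝ × ℝ} (a : Adj V w z) :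
    ∃ n, n ≠ 0 ∧ cr n w = cr n z ∧ 0 < cr n w ∧ (∀ y ∈ V, y ≠ w → y ≠ z → cr n y < cr n w) ∧
      (∀ q ∈ P, cr n q ≤ cr n w) ∧ (∀ q ∈ P, cr n q = cr n w → q ∈ segment ℝ w z) ∧
      ∃ t : ℝ, t ≠ 0 ∧ n = t • (z - w) := by
  obtain ⟨hw, hz, hne, n, e, hn⟩ := a
  have hn0 : n ≠ 0 := by
    rintro rfl
    obtain ⟨y, hy, h1, h2, _⟩ := h.three w z w w
    have := hn y hy h1 h2
    simp [cr_zero_left] at this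
  have hm : ∀ q ∈ P, cr n q ≤ cr n w := by
    intro q hq
    rcases h.adj_max hw hz e hn hq with h1 | ⟨a, b, ha, hb, hab, rfl⟩
    · exact h1.le
    · rw [cr_add, cr_smul, cr_smul, ← e, ← add_mul, hab, one_mul]
  refine ⟨n, hn0, e, ?_, hn, hm, ?_, ?_⟩
  · have := h.int_lt hm hn0 h.int0
    rwa [cr_zero] at this
  · intro q hq hc
    rcases h.adj_max hw hz e hn hq with h1 | h1
    · exact absurd hc h1.ne
    · exact h1
  · obtain ⟨t, ht⟩ := par_of_cr (n := z - w) (d := n) (sub_ne_zero.2 hne.symm) (by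
      rw [cr_comm, cr_sub, e]; simp)
    refine ⟨t, ?_, ht⟩
    rintro rfl
    simp at ht; exact hn0 ht

lemma D_smul {q u : ℝ × ℝ} {t : ℝ} (ht : 0 < t) : q ∈ D P (t • u) ↔ q ∈ D P u := by
  constructor
  · rintro ⟨h, ε, he, hi⟩
    exact ⟨h, ε * t, by positivity, by rwa [mul_smul]⟩
  · rintro ⟨h, ε, he, hi⟩
    refine ⟨h, ε / t, by positivity, ?_⟩
    rwa [smul_smul, div_mul_cancel₀ _ ht.ne']

/-- points on the two extreme levels of an edge do not move inside along the edge -/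
lemma Poly.edge_not_D (h : Poly P V) {w z : ℝ × ℝ} (a : Adj V w z) :
    w ∉ D P (z - w) ∧ z ∉ D P (z - w) ∧ -w ∉ D P (z - w) ∧ -z ∉ D P (z - w) := by
  obtain ⟨n, hn0, e, hpos, hn, hm, hs, t, ht, rfl⟩ := h.adj_normal a
  have key : ∀ q, (cr (t • (z - w)) q = cr (t • (z - w)) w ∨ cr (t • (z - w)) q = - cr (t • (z - w)) w)
      → q ∉ D P (z - w) := by
    rintro q hq ⟨hP, ε, he, hi⟩
    have h1 := h.int_lt hm hn0 hi
    have h2 := h.int_lt hm hn0 (h.negI hi)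
    rw [cr_neg] at h2
    have h0 : cr (t • (z - w)) (z - w) = 0 := by rw [cr_smul_left, cr_self, mul_zero]
    rw [cr_add, cr_smul, h0] at h1 h2
    rcases hq with h | h <;> linarith
  refine ⟨key _ (Or.inl rfl), key _ (Or.inl e.symm), key _ (Or.inr (cr_neg _ _)), key _ (Or.inr ?_)⟩
  rw [cr_neg, e]

/-- dichotomy for an edge direction -/
lemma Poly.edge_dich (h : Poly P V) {w z q : ℝ × ℝ} (a : Adj V w z) (hq : q ∈ P)
    (hqi : q ∉ interior P) :
    q ∈ segment ℝ w z ∨ -q ∈ segment ℝ w z ∨ q ∈ D P (z - w) ∨ q ∈ D P (-(z - w)) := by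
  obtain ⟨n, hn0, e, hpos, hn, hm, hs, t, ht, hnt⟩ := h.adj_normal a
  by_cases h1 : q ∈ segment ℝ w z
  · exact Or.inl h1
  by_cases h2 : -q ∈ segment ℝ w z
  · exact Or.inr (Or.inl h2)
  have h3 : cr n q < cr n w := lt_of_le_of_ne (hm q hq) (fun hc => h1 (hs q hq hc))
  have h4 : cr n (-q) < cr n w := lt_of_le_of_ne (hm _ (h.negP hq)) (fun hc => h2 (hs _ (h.negP hq) hc))
  rw [cr_neg] at h4
  have := h.dich hn0 (h.subV a.1) hq hqi h3 (by linarith)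
  right; right
  rw [hnt] at this
  rcases ht.lt_or_gt with h0 | h0
  · have e1 : t • (z - w) = (-t) • (-(z - w)) := by rw [neg_smul_neg]
    have e2 : -(t • (z - w)) = (-t) • (z - w) := by simp
    rw [e2, e1, D_smul (by linarith), D_smul (by linarith)] at this
    exact this.symm
  · have e2 : -(t • (z - w)) = t • (-(z - w)) := by rw [smul_neg]
    rwa [e2, D_smul h0, D_smul h0] at this


lemma Poly.ext_seg (h : Poly P V) {v a b : ℝ × ℝ} (hv : v ∈ V) (ha : a ∈ V) (hb : b ∈ V)
    (hav : a ≠ v) (hbv : b ≠ v) : v ∉ segment ℝ a b := by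
  intro hc
  apply h.ext v hv
  exact segment_subset_convexHull (s := (V : Set (ℝ × ℝ)) \ {v}) ⟨ha, hav⟩ ⟨hb, hbv⟩ hc

lemma cr_two {n m r : ℝ × ℝ} (hnm : cr n m ≠ 0) (h1 : cr n r = 0) (h2 : cr m r = 0) : r = 0 := by
  have hn : n ≠ 0 := by rintro rfl; simp [cr_zero_left] at hnm
  obtain ⟨t, rfl⟩ := par_of_cr hn h1
  rw [cr_smul, cr_comm] at h2
  rcases mul_eq_zero.1 h2 with h | h
  · simp [h]
  · exact absurd (by linarith) hnm

/-- every vertex has two neighbours, and a counterclockwise one -/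
lemma Poly.nbr2 (h : Poly P V) {w : ℝ × ℝ} (hw : w ∈ V) :
    ∃ z z', Adj V w z ∧ Adj V w z' ∧ z ≠ z' := by
  obtain ⟨u, g⟩ := h.exposed hw
  set m : ℝ × ℝ := (-u.2, u.1) with hm
  have hu := h.gen_ne g
  have hum : cr u m ≠ 0 := by
    simp only [cr, hm]
    intro hc
    apply hu
    have h1 : u.1 = 0 := by nlinarith [sq_nonneg u.1, sq_nonneg u.2]
    have h2 : u.2 = 0 := by nlinarith [sq_nonneg u.1, sq_nonneg u.2]
    exact Prod.ext h1 h2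
  set A : ℝ × ℝ → ℝ := fun y => cr u (w - y) with hA
  set L : ℝ × ℝ → ℝ := fun y => cr m (y - w) with hL
  have hApos : ∀ y ∈ V, y ≠ w → 0 < A y := by
    intro y hy hyw
    have := g.2 y hy hyw
    simp only [hA, cr_sub]; linarith
  have inj : ∀ y ∈ V, ∀ z ∈ V, y ≠ w → z ≠ w → L y / A y = L z / A z → y = z := by
    intro y hy z hz hyw hzw e
    have h1 := hApos y hy hyw
    have h2 := hApos z hz hzw
    rw [div_eq_div_iff h1.ne' h2.ne'] at e
    have e0 : A z • (y - w) - A y • (z - w) = 0 := by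
      apply cr_two hum
      · rw [cr_sub, cr_smul, cr_smul]
        simp only [hA, cr_sub]; ring
      · rw [cr_sub, cr_smul, cr_smul]
        simp only [hL] at e
        linarith
    have e1 : A z • (y - w) = A y • (z - w) := sub_eq_zero.1 e0
    by_contra hyz
    rcases lt_trichotomy (A y) (A z) with hlt | heq | hlt
    · apply h.ext_seg hy hw hz (Ne.symm hyw) (Ne.symm hyz)
      refine ⟨1 - A y / A z, A y / A z, ?_, by positivity, by ring, ?_⟩
      · rw [sub_nonneg, div_le_one h2]; exact hlt.le
      · have : y - w = (A y / A z) • (z - w) := by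
          rw [div_eq_inv_mul, mul_smul, ← e1, smul_smul, inv_mul_cancel₀ h2.ne', one_smul]
        have this2 := eq_add_of_sub_eq this
        conv_rhs => rw [this2]
        module
    · rw [heq] at e1
      have := smul_right_injective _ h2.ne' e1
      exact hyz (sub_left_injective this)
    · apply h.ext_seg hz hw hy (Ne.symm hzw) hyz
      refine ⟨1 - A z / A y, A z / A y, ?_, by positivity, by ring, ?_⟩
      · rw [sub_nonneg, div_le_one h1]; exact hlt.le
      · have : z - w = (A z / A y) • (y - w) := by
          rw [div_eq_inv_mul, mul_smul, e1, smul_smul, inv_mul_cancel₀ h1.ne', one_smul]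
        have this2 := eq_add_of_sub_eq this
        conv_rhs => rw [this2]
        module
  obtain ⟨y0, hy0, hy0w, _⟩ := h.three w w w w
  have hne : (V.erase w).Nonempty := ⟨y0, Finset.mem_erase.2 ⟨hy0w, hy0⟩⟩
  obtain ⟨z, hz, hzmax⟩ := Finset.exists_max_image (V.erase w) (fun y => L y / A y) hne
  obtain ⟨z', hz', hzmin⟩ := Finset.exists_min_image (V.erase w) (fun y => L y / A y) hne
  obtain ⟨hzw, hzV⟩ := Finset.mem_erase.1 hz
  obtain ⟨hzw', hzV'⟩ := Finset.mem_erase.1 hz'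
  have hAz := hApos z hzV hzw
  have hAz' := hApos z' hzV' hzw'
  have expand : ∀ (c : ℝ) y, cr (m + c • u) y - cr (m + c • u) w = L y - c * A y := by
    intro c y; simp only [hL, hA, cr]; simp; ring
  refine ⟨z, z', ⟨hw, hzV, hzw.symm, m + (L z / A z) • u, ?_, ?_⟩,
    ⟨hw, hzV', hzw'.symm, -(m + (L z' / A z') • u), ?_, ?_⟩, ?_⟩
  · have := expand (L z / A z) z
    rw [div_mul_cancel₀ _ hAz.ne'] at this; linarith
  · intro y hy hyw hyz
    have h1 := hzmax y (Finset.mem_erase.2 ⟨hyw, hy⟩)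
    have h2 : L y / A y < L z / A z := lt_of_le_of_ne h1 (fun hc => hyz (inj y hy z hzV hyw hzw hc))
    rw [div_lt_iff₀ (hApos y hy hyw)] at h2
    have := expand (L z / A z) y
    linarith
  · have := expand (L z' / A z') z'
    rw [div_mul_cancel₀ _ hAz'.ne'] at this
    rw [cr_comm, cr_comm _ z', cr_neg, cr_neg, cr_comm w, cr_comm z']; linarith
  · intro y hy hyw hyz
    have h1 := hzmin y (Finset.mem_erase.2 ⟨hyw, hy⟩)
    have h2 : L z' / A z' < L y / A y := lt_of_le_of_ne h1 (fun hc => hyz (inj y hy z' hzV' hyw hzw' hc.symm))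
    rw [lt_div_iff₀ (hApos y hy hyw)] at h2
    have := expand (L z' / A z') y
    rw [cr_comm, cr_comm _ w, cr_neg, cr_neg, cr_comm w, cr_comm y]; linarith
  · rintro rfl
    obtain ⟨y1, hy1, h1, h2, _⟩ := h.three w z w w
    apply h2
    apply inj y1 hy1 z hzV h1 hzw
    apply le_antisymm
    · exact hzmax _ (Finset.mem_erase.2 ⟨h1, hy1⟩)
    · exact hzmin _ (Finset.mem_erase.2 ⟨h1, hy1⟩)

lemma Poly.other (h : Poly P V) {w : ℝ × ℝ} (hw : w ∈ V) (a : ℝ × ℝ) : ∃ z, Adj V w z ∧ z ≠ a := by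
  obtain ⟨z, z', h1, h2, h3⟩ := h.nbr2 hw
  by_cases hz : z = a
  · exact ⟨z', h2, fun hc => h3 (hz.trans hc.symm)⟩
  · exact ⟨z, h1, hz⟩

/-- `w, z, z2` is a path in the boundary -/
def Path (V : Finset (ℝ × ℝ)) (w z z2 : ℝ × ℝ) : Prop := Adj V w z ∧ Adj V z z2 ∧ w ≠ z2

lemma Path.rev {w z z2 : ℝ × ℝ} (p : Path V w z z2) : Path V z2 z w :=
  ⟨p.2.1.symm, p.1.symm, p.2.2.symm⟩

/-- `P` lies in the cone at a vertex spanned by its neighbours -/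
lemma Poly.cone (h : Poly P V) {w z z2 : ℝ × ℝ} (p : Path V w z z2) {q : ℝ × ℝ} (hq : q ∈ P) :
    ∃ a b : ℝ, 0 ≤ a ∧ 0 ≤ b ∧ q - z = a • (w - z) + b • (z2 - z) := by
  obtain ⟨p1, p2, hne⟩ := p
  obtain ⟨n1, _, e1, _, hn1, hm1, _, _⟩ := h.adj_normal p1
  obtain ⟨n2, _, e2, _, hn2, hm2, _, _⟩ := h.adj_normal p2
  have a1 := hn1 z2 p2.2.1 hne.symm p2.2.2.1.symm
  have a2 := hn2 w p1.1 p1.2.2.1 hne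
  have b1 := hm1 q hq
  have b2 := hm2 q hq
  refine ⟨cr n2 (q - z) / cr n2 (w - z), cr n1 (q - z) / cr n1 (z2 - z), ?_, ?_, ?_⟩
  · apply div_nonneg_of_nonpos <;> rw [cr_sub] <;> linarith
  · apply div_nonneg_of_nonpos <;> rw [cr_sub] <;> linarith
  · have d1 : cr n2 (w - z) ≠ 0 := by rw [cr_sub]; linarith
    have d2 : cr n1 (z2 - z) ≠ 0 := by rw [cr_sub]; linarith
    have d3 : cr n1 (w - z) = 0 := by rw [cr_sub]; linarith
    have d4 : cr n2 (z2 - z) = 0 := by rw [cr_sub]; linarith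
    have hn : cr n1 n2 ≠ 0 := by
      intro hc
      have : n1 ≠ 0 := by rintro rfl; simp [cr_zero_left] at d2
      obtain ⟨t, rfl⟩ := par_of_cr this hc
      rw [cr_smul_left, d3, mul_zero] at d1
      exact d1 rfl
    rw [← sub_eq_zero]
    apply cr_two hn
    · rw [cr_sub, cr_add, cr_smul, cr_smul, d3, div_mul_cancel₀ _ d2]; ring
    · rw [cr_sub, cr_add, cr_smul, cr_smul, d4, div_mul_cancel₀ _ d1]; ring

lemma Poly.path_gen (h : Poly P V) {w z z2 : ℝ × ℝ} (p : Path V w z z2) :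
    ∃ w', (w' = z ∨ w' = -z) ∧ Gen V (z2 - w) w' := by
  have hz := p.1.2.1
  have key : ∀ y ∈ V, y ≠ z → ∃ c : ℝ, 0 < c ∧ cr (z2 - w) y - cr (z2 - w) z = c * cr (z - w) (z2 - z) := by
    intro y hy hyz
    obtain ⟨a, b, ha, hb, e⟩ := h.cone p (h.subV hy)
    refine ⟨a + b, ?_, ?_⟩
    · rcases ha.eq_or_lt with rfl | ha
      · rcases hb.eq_or_lt with rfl | hb
        · simp [sub_eq_zero] at e; exact absurd e hyz
        · linarith
      · linarith
    · rw [← cr_sub, e]; simp [cr]; ring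
  rcases lt_trichotomy (cr (z - w) (z2 - z)) 0 with h0 | h0 | h0
  · refine ⟨z, Or.inl rfl, hz, fun y hy hyz => ?_⟩
    obtain ⟨c, hc, e⟩ := key y hy hyz
    nlinarith
  · exfalso
    obtain ⟨n1, _, e1, _, hn1, hm1, _, t, ht, rfl⟩ := h.adj_normal p.1
    have a1 := hn1 z2 p.2.1.2.1 p.2.2.symm p.2.1.2.2.1.symm
    have h00 : cr (t • (z - w)) (z2 - z) = 0 := by rw [cr_smul_left, h0, mul_zero]
    rw [cr_sub] at h00
    linarith
  · refine ⟨-z, Or.inr rfl, h.neg _ hz, fun y hy hyz => ?_⟩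
    obtain ⟨c, hc, e⟩ := key (-y) (h.neg _ hy) (fun hc => hyz (by rw [← hc, neg_neg]))
    rw [cr_neg] at *
    nlinarith

lemma Poly.not_self_adj (h : Poly P V) {w : ℝ × ℝ} (a : Adj V w (-w)) : False := by
  obtain ⟨n1, _, e1, hpos, _⟩ := h.adj_normal a
  rw [cr_neg] at e1; linarith

lemma Poly.z_not_D (h : Poly P V) {w z z2 : ℝ × ℝ} (p : Path V w z z2) :
    z ∉ D P (z2 - w) ∧ -z ∉ D P (z2 - w) := by
  obtain ⟨w', hw', g⟩ := h.path_gen p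
  rcases hw' with rfl | rfl
  · exact ⟨h.gen_not_D g (Or.inl rfl), h.gen_not_D g (Or.inr (cr_neg _ _))⟩
  · exact ⟨h.gen_not_D g (Or.inr (by rw [cr_neg, neg_neg])), h.gen_not_D g (Or.inl rfl)⟩

/-- the key comparison of inward directions -/
lemma Poly.keyQ (h : Poly P V) {w z z2 : ℝ × ℝ} (p : Path V w z z2) {q : ℝ × ℝ}
    (hqi : q ∉ interior P) (hq : q ∈ D P (z2 - w)) :
    q = w ∨ q ∈ openSegment ℝ w z ∨ q ∈ D P (z - w) := by
  have hqP := hq.1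
  have zD := h.z_not_D p
  rcases h.edge_dich p.1 hqP hqi with h1 | h1 | h1 | h1
  · by_cases hw : q = w
    · exact Or.inl hw
    by_cases hz : q = z
    · subst hz; exact absurd hq zD.1
    · exact Or.inr (Or.inl (mem_openSegment_of_ne_left_right (Ne.symm hw) (Ne.symm hz) h1))
  · exfalso
    obtain ⟨n1, _, e1, _, hn1, hm1, _, _⟩ := h.adj_normal p.1
    have a1 := hn1 z2 p.2.1.2.1 p.2.2.symm p.2.1.2.2.1.symm
    obtain ⟨_, ε, he, hi⟩ := hq
    have h2 := hm1 _ (h.negP (interior_subset hi))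
    have h3 : cr n1 (-q) = cr n1 w := by
      obtain ⟨a, b, ha, hb, hab, e⟩ := h1
      rw [← e, cr_add, cr_smul, cr_smul, ← e1, ← add_mul, hab, one_mul]
    rw [cr_neg] at h2 h3
    rw [cr_add, cr_smul, cr_sub] at h2
    nlinarith
  · exact Or.inr (Or.inr h1)
  · exfalso
    obtain ⟨ε1, he1, hi1⟩ := h.D_small h1
    obtain ⟨ε2, he2, hi2⟩ := h.D_small hq
    set ε := min ε1 ε2 with hε
    have he : 0 < ε := lt_min he1 he2
    have i1 : q + ε • (w - z) ∈ interior P := by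
      have := hi1 ε he (min_le_left _ _)
      rwa [neg_sub] at this
    have i2 := hi2 ε he (min_le_right _ _)
    have i3 := h.combo i1 (interior_subset i2) (a := 1/2) (b := 1/2) (by norm_num) (by norm_num)
      (by norm_num)
    have e3 : (1/2 : ℝ) • (q + ε • (w - z)) + (1/2 : ℝ) • (q + ε • (z2 - w)) =
        q + (ε/2) • (z2 - z) := by module
    rw [e3] at i3
    have i1 : q + (ε/2) • (w - z) ∈ interior P := by
      have := hi1 (ε/2) (by linarith) (by have := min_le_left ε1 ε2; linarith)
      rwa [neg_sub] at this
    obtain ⟨a, b, ha, hb, e⟩ := h.cone p hqP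
    have hz : q ≠ z := by rintro rfl; exact zD.1 hq
    have hab : 0 < a + b := by
      rcases ha.eq_or_lt with rfl | ha
      · rcases hb.eq_or_lt with rfl | hb
        · simp [sub_eq_zero] at e; exact absurd e hz
        · linarith
      · linarith
    -- an interior point on the segment between the two inner points
    have i4 : q + (ε/2) • ((a/(a+b)) • (w - z) + (b/(a+b)) • (z2 - z)) ∈ interior P := by
      have := h.conv.interior i1 i3 (a := a/(a+b)) (b := b/(a+b)) (by positivity) (by positivity)
        (by field_simp)
      convert this using 1
      have : q = (a/(a+b)) • q + (b/(a+b)) • q := by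
        rw [← add_smul, ← add_div, div_self hab.ne', one_smul]
      conv_lhs => rw [this]
      module
    have e5 : (a/(a+b)) • (w - z) + (b/(a+b)) • (z2 - z) = (1/(a+b)) • (q - z) := by
      rw [e]; module
    rw [e5] at i4
    apply hqi
    refine h.int_of_two (u := q - z) ⟨hqP, ε/2*(1/(a+b)), by positivity, by rwa [mul_smul]⟩ one_pos ?_
    simpa using h.subV p.1.2.1

/-- rotation lemma, first half -/
lemma Poly.rot1 (h : Poly P V) {w z z2 : ℝ × ℝ} (p : Path V w z z2) {y : ℝ × ℝ} (hy : y ∈ V) :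
    y ∈ D P (z2 - w) ↔ y = w ∨ y ∈ D P (z - w) := by
  have fwd : ∀ y ∈ V, y ∈ D P (z2 - w) → y = w ∨ y ∈ D P (z - w) := by
    intro y hy hD
    rcases h.keyQ p (h.not_int hy) hD with h1 | h1 | h1
    · exact Or.inl h1
    · by_cases hyw : y = w
      · exact Or.inl hyw
      by_cases hyz : y = z
      · subst hyz; exact absurd hD (h.z_not_D p).1
      exact absurd (openSegment_subset_segment _ _ _ h1) (h.ext_seg hy p.1.1 p.1.2.1 (Ne.symm hyw) (Ne.symm hyz))
    · exact Or.inr h1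
  refine ⟨fwd y hy, ?_⟩
  obtain ⟨w', hw', g⟩ := h.path_gen p
  have dich : ∀ y ∈ V, y ≠ z → y ≠ -z → y ∈ D P (z2 - w) ∨ y ∈ D P (-(z2 - w)) := by
    intro y hy h1 h2
    apply h.gen_dich g (h.subV hy) (h.not_int hy)
    · rcases hw' with rfl | rfl
      exacts [h1, h2]
    · rcases hw' with rfl | rfl
      exacts [h2, by rwa [neg_neg]]
  have en := h.edge_not_D p.1
  rintro (rfl | hyD)
  · rcases dich y hy p.1.2.2.1 (fun hc => h.not_self_adj (w := z) (by rw [← hc]; exact p.1.symm)) with h1 | h1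
    · exact h1
    · exfalso
      apply h.not_int hy
      refine h.int_of_two h1 one_pos ?_
      simpa using h.subV p.2.1.2.1
  · rcases dich y hy (by rintro rfl; exact en.2.1 hyD) (by rintro rfl; exact en.2.2.2 hyD) with h1 | h1
    · exact h1
    · exfalso
      have h2 := h.D_neg h1
      rw [neg_neg] at h2
      rcases fwd _ (h.neg _ hy) h2 with h3 | h3
      · have e4 : y = -w := by rw [← h3, neg_neg]
        rw [e4] at hyD
        exact en.2.2.1 hyD
      · have := h.D_neg h3
        rw [neg_neg] at this
        exact h.not_int hy (h.not_both hyD this)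

lemma Poly.rot2 (h : Poly P V) {w z z2 : ℝ × ℝ} (p : Path V w z z2) {y : ℝ × ℝ} (hy : y ∈ V) :
    y ∈ D P (z2 - w) ↔ y = -z2 ∨ y ∈ D P (z2 - z) := by
  have := h.rot1 p.rev (h.neg _ hy)
  constructor
  · intro h1
    have h2 := h.D_neg h1
    rw [neg_sub] at h2
    rcases this.1 h2 with h3 | h3
    · left; rw [← h3, neg_neg]
    · right; have := h.D_neg h3
      rwa [neg_neg, neg_sub] at this
  · intro h1
    have : -y ∈ D P (w - z2) := by
      apply this.2
      rcases h1 with h1 | h1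
      · left; rw [h1, neg_neg]
      · right; have := h.D_neg h1
        rwa [neg_sub] at this
    have := h.D_neg this
    rwa [neg_neg, neg_sub] at this

/-- the half edge vector is interior -/
lemma Poly.half (h : Poly P V) {w z : ℝ × ℝ} (a : Adj V w z) :
    (1/2 : ℝ) • (w - z) ∈ interior P := by
  obtain ⟨y, hy, y1, y2, y3, y4⟩ := h.three w z (-w) (-z)
  obtain ⟨n, hn0, e, hpos, hn, hm, hs, t, ht, hnt⟩ := h.adj_normal a
  have hc : cr w z ≠ 0 := by
    intro hc
    have : w ≠ 0 := by rintro rfl; simp [cr_zero] at hpos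
    obtain ⟨r, rfl⟩ := par_of_cr this hc
    rw [cr_smul] at e
    have : r = 1 := by
      have : (r - 1) * cr n w = 0 := by linarith
      rcases mul_eq_zero.1 this with h | h <;> linarith
    exact a.2.2.1 (by rw [this, one_smul])
  obtain ⟨α, β, rfl⟩ : ∃ α β : ℝ, y = α • w + β • z := by
    refine ⟨cr y z / cr w z, cr w y / cr w z, ?_⟩
    ext
    · simp; field_simp; simp [cr]; ring
    · simp; field_simp; simp [cr]; ring
  have l1 := hn _ hy y1 y2
  have l2 := hn _ (h.neg _ hy) (fun hc => y3 (neg_eq_iff_eq_neg.1 hc)) (fun hc => y4 (neg_eq_iff_eq_neg.1 hc))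
  rw [cr_neg] at l2
  rw [cr_add, cr_smul, cr_smul, ← e] at l1 l2
  have s1 : α + β < 1 := by nlinarith
  have s2 : -1 < α + β := by nlinarith
  have hwP := h.subV a.1
  have hzP := h.subV a.2.1
  -- suppose we have a point of V further out
  have main : ∀ α β : ℝ, α • w + β • z ∈ P → α + β < 1 → -1 < α + β → 1 < α - β →
      (1/2 : ℝ) • (w - z) ∈ interior P := by
    intro α β hy s1 s2 hd
    obtain ⟨δ, hδ, hp⟩ : ∃ δ : ℝ, 1 < δ ∧ (δ / 2) • (w - z) ∈ P := by
      rcases le_or_gt 0 (α + β) with hs | hs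
      · refine ⟨((α - β) + (α + β)) / (1 + (α + β)), ?_, ?_⟩
        · rw [lt_div_iff₀ (by linarith)]; linarith
        · have := h.conv hy (h.negP hzP) (a := 1 / (1 + (α + β))) (b := (α + β) / (1 + (α + β)))
            (by positivity) (by positivity) (by field_simp)
          convert this using 1
          have : (1 + (α + β)) ≠ 0 := by positivity
          ext <;> simp <;> field_simp <;> ring
      · have hpos' : 0 < 1 - (α + β) := by linarith
        refine ⟨((α - β) - (α + β)) / (1 - (α + β)), ?_, ?_⟩
        · rw [lt_div_iff₀ (by linarith)]; linarith
        · have := h.conv hy hwP (a := 1 / (1 - (α + β))) (b := -(α + β) / (1 - (α + β)))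
            (by positivity) (div_nonneg (by linarith) hpos'.le) (by field_simp; ring)
          convert this using 1
          have := hpos'.ne'
          ext <;> simp <;> field_simp <;> ring
    have := h.combo h.int0 hp (a := 1 - 1/δ) (b := 1/δ) (by
      rw [sub_pos, div_lt_one (by linarith)]; exact hδ) (by positivity) (by ring)
    rw [smul_zero, zero_add, smul_smul] at this
    convert this using 2
    field_simp
  by_cases d1 : 1 < α - β
  · exact main α β (h.subV hy) s1 s2 d1
  by_cases d2 : 1 < -(α - β)
  · apply main (-α) (-β) _ (by linarith) (by linarith) (by linarith)
    have := h.negP (h.subV hy)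
    convert this using 1
    module
  exfalso
  push Not at d1 d2
  set Y := α • w + β • z with hY
  apply h.ext _ hy
  have cv := convex_convexHull ℝ ((V : Set (ℝ × ℝ)) \ {Y})
  have m1 := subset_convexHull ℝ ((V : Set (ℝ × ℝ)) \ {Y}) (show w ∈ _ from ⟨a.1, Ne.symm y1⟩)
  have m2 := subset_convexHull ℝ ((V : Set (ℝ × ℝ)) \ {Y}) (show z ∈ _ from ⟨a.2.1, Ne.symm y2⟩)
  have m3 := subset_convexHull ℝ ((V : Set (ℝ × ℝ)) \ {Y}) (show -w ∈ _ from ⟨h.neg _ a.1, Ne.symm y3⟩)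
  have m4 := subset_convexHull ℝ ((V : Set (ℝ × ℝ)) \ {Y}) (show -z ∈ _ from ⟨h.neg _ a.2.1, Ne.symm y4⟩)
  have c1 := cv m1 m2 (a := (1 + (α - β))/2) (b := (1 - (α - β))/2) (by linarith) (by linarith) (by ring)
  have c2 := cv m4 m3 (a := (1 + (α - β))/2) (b := (1 - (α - β))/2) (by linarith) (by linarith) (by ring)
  have c3 := cv c1 c2 (a := (1 + (α + β))/2) (b := (1 - (α + β))/2) (by linarith) (by linarith) (by ring)
  convert c3 using 1
  rw [hY]; module

/-- moving by a full edge vector in an inward direction stays in the interior -/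
lemma Poly.step (h : Poly P V) {w z q : ℝ × ℝ} (a : Adj V w z) (hqi : q ∉ interior P)
    (hq : q ∈ D P (z - w)) : q + (z - w) ∈ interior P := by
  have hh := h.half a
  have hh' := h.half a.symm
  obtain ⟨n, hn0, e, hpos, hn, hm, hs, t, ht, hnt⟩ := h.adj_normal a
  have hnd : cr n (z - w) = 0 := by rw [cr_sub]; linarith
  obtain ⟨ε, he, hi⟩ := h.D_small hq
  -- level of `q`
  have l1 := h.int_lt hm hn0 (hi ε he le_rfl)
  have l2 := h.int_lt hm hn0 (h.negI (hi ε he le_rfl))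
  rw [cr_neg] at l2
  rw [cr_add, cr_smul, hnd] at l1 l2
  set μ := cr n q / cr n w with hμ
  have m1 : μ < 1 := by rw [hμ, div_lt_one hpos]; linarith
  have m2 : -1 < μ := by rw [hμ, lt_div_iff₀ hpos]; linarith
  have hwP := h.subV a.1
  have hzP := h.subV a.2.1
  set d := z - w with hd
  set R : ℝ × ℝ := (1/2 : ℝ) • (w - z) + μ • ((1/2 : ℝ) • (w + z)) with hR
  have R0 : R ∈ interior P := by
    rcases le_or_gt 0 μ with h0 | h0
    · have := h.combo hh hwP (a := 1 - μ) (b := μ) (by linarith) h0 (by ring)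
      convert this using 1
      rw [hR]; module
    · have := h.combo hh (h.negP hzP) (a := 1 + μ) (b := -μ) (by linarith) (by linarith) (by ring)
      convert this using 1
      rw [hR]; module
  have R1 : R + d ∈ interior P := by
    rcases le_or_gt 0 μ with h0 | h0
    · have := h.combo hh' hzP (a := 1 - μ) (b := μ) (by linarith) h0 (by ring)
      convert this using 1
      rw [hR, hd]; module
    · have := h.combo hh' (h.negP hwP) (a := 1 + μ) (b := -μ) (by linarith) (by linarith) (by ring)
      convert this using 1
      rw [hR, hd]; module
  obtain ⟨τ', hτ'⟩ := par_of_cr (n := n) (d := q - R) hn0 (by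
    have : μ * cr n w = cr n q := by rw [hμ]; field_simp
    rw [hR, cr_sub, cr_add, cr_smul, cr_smul, cr_smul, cr_sub, cr_add, ← e]
    linarith)
  obtain ⟨τ, hτ⟩ : ∃ τ : ℝ, q - R = τ • d := ⟨τ' * t, by rw [hτ', hnt, smul_smul]⟩
  have hRq : R = q - τ • d := by rw [← hτ]; abel
  rcases lt_trichotomy τ 0 with h0 | h0 | h0
  · have hδ1 := min_le_left ε 1
    have hδ2 := min_le_right ε 1
    have hδ0 : 0 < min ε 1 := lt_min he one_pos
    set δ := min ε 1
    have i1 := hi δ hδ0 hδ1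
    have hpos2 : 0 < 1 - τ - δ := by linarith
    have := h.combo i1 (interior_subset R1) (a := -τ / (1 - τ - δ)) (b := (1 - δ) / (1 - τ - δ))
      (div_pos (by linarith) hpos2) (div_nonneg (by linarith) hpos2.le) (by field_simp; ring)
    convert this using 1
    rw [hRq]
    have := hpos2.ne'
    ext <;> simp <;> field_simp <;> ring
  · exfalso
    rw [h0, zero_smul, sub_zero] at hRq
    exact hqi (hRq ▸ R0)
  · exfalso
    exact hqi (h.int_of_two hq h0 (by rw [← hRq]; exact interior_subset R0))

/-- counterclockwise neighbour -/
lemma Poly.next (h : Poly P V) {w : ℝ × ℝ} (hw : w ∈ V) :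
    ∃ z, Adj V w z ∧ ∀ y ∈ V, y ≠ w → y ≠ z → 0 < cr (z - w) (y - w) := by
  obtain ⟨z, z', a, a', hne⟩ := h.nbr2 hw
  obtain ⟨n, _, e, _, hn, _, _, t, ht, rfl⟩ := h.adj_normal a
  obtain ⟨n', _, e', _, hn', _, _, t', ht', rfl⟩ := h.adj_normal a'
  have f : ∀ y ∈ V, y ≠ w → y ≠ z → t * cr (z - w) (y - w) < 0 := by
    intro y hy h1 h2
    have := hn y hy h1 h2
    rw [← cr_smul_left, cr_sub]; linarith
  have f' : ∀ y ∈ V, y ≠ w → y ≠ z' → t' * cr (z' - w) (y - w) < 0 := by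
    intro y hy h1 h2
    have := hn' y hy h1 h2
    rw [← cr_smul_left, cr_sub]; linarith
  rcases ht.lt_or_gt with h0 | h0
  · exact ⟨z, a, fun y hy h1 h2 => by nlinarith [f y hy h1 h2]⟩
  · have g1 := f z' a'.2.1 a'.2.2.1.symm hne.symm
    have g2 := f' z a.2.1 a.2.2.1.symm hne
    rw [cr_comm] at g2
    have h0' : t' < 0 := by
      by_contra hc
      push Not at hc
      nlinarith
    exact ⟨z', a', fun y hy h1 h2 => by nlinarith [f' y hy h1 h2]⟩

/-- the open counterclockwise edges are disjoint -/
lemma Poly.edges_disj (h : Poly P V) {w z w2 z2 q : ℝ × ℝ} (a : Adj V w z) (a2 : Adj V w2 z2)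
    (o : ∀ y ∈ V, y ≠ w → y ≠ z → 0 < cr (z - w) (y - w))
    (o2 : ∀ y ∈ V, y ≠ w2 → y ≠ z2 → 0 < cr (z2 - w2) (y - w2))
    (hq : q ∈ openSegment ℝ w z) (hq2 : q ∈ openSegment ℝ w2 z2) : w = w2 := by
  obtain ⟨n, _, e, _, hn, hm, _, _⟩ := h.adj_normal a
  have hl : cr n q = cr n w := by
    obtain ⟨a, b, ha, hb, hab, rfl⟩ := hq
    rw [cr_add, cr_smul, cr_smul, ← e, ← add_mul, hab, one_mul]
  obtain ⟨α, β, hα, hβ, hαβ, rfl⟩ := hq2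
  have m1 := hm _ (h.subV a2.1)
  have m2 := hm _ (h.subV a2.2.1)
  rw [cr_add, cr_smul, cr_smul] at hl
  have e1 : cr n w = α * cr n w + β * cr n w := by rw [← add_mul, hαβ, one_mul]
  have t1 : w2 = w ∨ w2 = z := by
    by_contra hc; push Not at hc
    have := hn _ a2.1 hc.1 hc.2
    nlinarith
  have t2 : z2 = w ∨ z2 = z := by
    by_contra hc; push Not at hc
    have := hn _ a2.2.1 hc.1 hc.2
    nlinarith
  rcases t1 with t1 | t1
  · exact t1.symm
  · rcases t2 with t2 | t2
    · exfalso
      obtain ⟨y, hy, y1, y2, _⟩ := h.three w z w z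
      have p1 := o y hy y1 y2
      have p2 := o2 y hy (by rwa [t1]) (by rwa [t2])
      rw [t1, t2] at p2
      have : cr (w - z) (y - z) = - cr (z - w) (y - w) := by simp [cr]; ring
      linarith
    · exact absurd (t1.trans t2.symm) a2.2.2.1

/-- connectivity: alternating sets agreeing at one vertex agree -/
lemma Poly.connected (h : Poly P V) (J1 J2 : ℝ × ℝ → Prop)
    (h1 : ∀ w z, Adj V w z → (J1 w ↔ ¬ J1 z)) (h2 : ∀ w z, Adj V w z → (J2 w ↔ ¬ J2 z))
    {w : ℝ × ℝ} (hw : w ∈ V) (hww : J1 w ↔ J2 w) : ∀ y ∈ V, (J1 y ↔ J2 y) := by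
  classical
  obtain ⟨u, g⟩ := h.exposed hw
  by_contra hc
  push Not at hc
  obtain ⟨y0, hy0, hne0⟩ := hc
  obtain ⟨y, hy, hmax⟩ := Finset.exists_max_image (V.filter (fun y => ¬ (J1 y ↔ J2 y))) (fun y => cr u y)
    ⟨y0, by simp only [Finset.mem_filter]; exact ⟨hy0, by tauto⟩⟩
  obtain ⟨hyV, hyn⟩ := Finset.mem_filter.1 hy
  have hyw : y ≠ w := by rintro rfl; exact hyn hww
  have hlt := g.2 y hyV hyw
  obtain ⟨z, z', a, a', hne⟩ := h.nbr2 hyV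
  obtain ⟨α, β, hα, hβ, e⟩ := h.cone (w := z) (z := y) (z2 := z') ⟨a.symm, a', hne⟩ (h.subV hw)
  have e2 : cr u w - cr u y = α * (cr u z - cr u y) + β * (cr u z' - cr u y) := by
    rw [← cr_sub, e, cr_add, cr_smul, cr_smul, cr_sub, cr_sub]
  have up : ∀ x, Adj V y x → cr u x ≤ cr u y := by
    intro x ax
    by_contra hlt'
    push Not at hlt'
    have : J1 x ↔ J2 x := by
      by_contra hx
      have := hmax x (Finset.mem_filter.2 ⟨ax.2.1, hx⟩)
      linarith
    have k1 := h1 y x ax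
    have k2 := h2 y x ax
    tauto
  have u1 := up z a
  have u2 := up z' a'
  nlinarith

end Tetra
namespace Tetra
variable {P : Set (ℝ × ℝ)} {V : Finset (ℝ × ℝ)}

section count

variable {ι : Type} {x : ι → ℝ × ℝ} {k : ℕ}

/-- number of translates for which `v` has relative position in `S` -/
noncomputable def N (x : ι → ℝ × ℝ) (v : ℝ × ℝ) (S : Set (ℝ × ℝ)) : ℕ := {i | v - x i ∈ S}.ncard

lemma Poly.fin' (h : Poly P V) (t : IsKFoldTranslativeTiling P x k) (v : ℝ × ℝ) (r : ℝ) :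
    {i | ∃ p ∈ P, ‖v - x i - p‖ ≤ r}.Finite := by
  obtain ⟨R, hR⟩ := h.compact.isBounded.exists_norm_le
  refine (t.1 (R + r + ‖v‖)).subset ?_
  rintro i ⟨p, hp, hi⟩
  have h1 := hR p hp
  have h2 : x i = v - p - (v - x i - p) := by abel
  show ‖x i‖ ≤ _
  rw [h2]
  have h3 := norm_sub_le (v - p) (v - x i - p)
  have h4 := norm_sub_le v p
  linarith

lemma Poly.fin (h : Poly P V) (t : IsKFoldTranslativeTiling P x k) (v : ℝ × ℝ) {S : Set (ℝ × ℝ)}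
    (hS : S ⊆ P) : {i | v - x i ∈ S}.Finite := by
  refine (h.fin' t v 0).subset ?_
  intro i hi
  exact ⟨_, hS hi, by simp⟩

lemma Poly.N_mono (h : Poly P V) (t : IsKFoldTranslativeTiling P x k) (v : ℝ × ℝ)
    {S T : Set (ℝ × ℝ)} (hST : S ⊆ T) (hT : T ⊆ P) : N x v S ≤ N x v T :=
  Set.ncard_le_ncard (fun _ hi => hST hi) (h.fin t v hT)

lemma Poly.N_union (h : Poly P V) (t : IsKFoldTranslativeTiling P x k) (v : ℝ × ℝ)
    {S T : Set (ℝ × ℝ)} (hS : S ⊆ P) (hT : T ⊆ P) (hd : ∀ q, q ∈ S → q ∉ T) :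
    N x v (S ∪ T) = N x v S + N x v T := by
  have : {i | v - x i ∈ S ∪ T} = {i | v - x i ∈ S} ∪ {i | v - x i ∈ T} := rfl
  unfold N
  rw [this, Set.ncard_union_eq _ (h.fin t v hS) (h.fin t v hT)]
  rw [Set.disjoint_left]
  intro i hi hi'
  exact hd _ hi hi'

lemma Poly.N_union_le (_h : Poly P V) (v : ℝ × ℝ)
    (S T : Set (ℝ × ℝ)) : N x v (S ∪ T) ≤ N x v S + N x v T := by
  have : {i | v - x i ∈ S ∪ T} = {i | v - x i ∈ S} ∪ {i | v - x i ∈ T} := rfl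
  unfold N
  rw [this]
  exact Set.ncard_union_le _ _

lemma D_sub (u : ℝ × ℝ) : D P u ⊆ P := fun _ h => h.1

lemma Poly.local_ev (h : Poly P V) {u w : ℝ × ℝ} (g : Gen V u w) (q : ℝ × ℝ) :
    ∀ᶠ ε in nhdsWithin (0 : ℝ) (Set.Ioi 0),
      (q + ε • u ∈ P → q ∈ D P u) ∧ (q ∈ D P u → q + ε • u ∈ interior P) := by
  have hpos : ∀ᶠ ε in nhdsWithin (0 : ℝ) (Set.Ioi 0), 0 < ε := self_mem_nhdsWithin
  by_cases hq : q ∈ P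
  · by_cases hD : q ∈ D P u
    · obtain ⟨ε, he, hi⟩ := h.D_small hD
      have : ∀ᶠ δ in nhdsWithin (0 : ℝ) (Set.Ioi 0), δ < ε :=
        nhdsWithin_le_nhds (Iio_mem_nhds he)
      filter_upwards [hpos, this] with δ h1 h2
      exact ⟨fun _ => hD, fun _ => hi δ h1 h2.le⟩
    · filter_upwards [hpos] with δ h1
      exact ⟨fun hc => absurd hc (h.gen_out g hq hD h1), fun hc => absurd hc hD⟩
  · have hc : Filter.Tendsto (fun ε : ℝ => q + ε • u) (nhdsWithin 0 (Set.Ioi 0)) (nhds q) := by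
      have : Filter.Tendsto (fun ε : ℝ => q + ε • u) (nhds 0) (nhds (q + (0 : ℝ) • u)) :=
        Continuous.tendsto (by fun_prop) 0
      simp only [zero_smul, add_zero] at this
      exact this.mono_left nhdsWithin_le_nhds
    have h1 := hc.eventually (h.closed.isOpen_compl.mem_nhds hq)
    filter_upwards [h1] with δ h2
    exact ⟨fun hc => absurd hc h2, fun hc => absurd hc.1 hq⟩

/-- generic directions are covered exactly `k` times -/
lemma Poly.gen_count (h : Poly P V) (t : IsKFoldTranslativeTiling P x k) {u w : ℝ × ℝ}
    (g : Gen V u w) (v : ℝ × ℝ) : N x v (D P u) = k := by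
  have hfin := h.fin' t v ‖u‖
  have ev := (Filter.eventually_all_finite hfin).2 (fun i _ => h.local_ev g (v - x i))
  have h1 : ∀ᶠ δ in nhdsWithin (0 : ℝ) (Set.Ioi 0), δ < 1 :=
    nhdsWithin_le_nhds (Iio_mem_nhds one_pos)
  have hpos : ∀ᶠ ε in nhdsWithin (0 : ℝ) (Set.Ioi 0), 0 < ε := self_mem_nhdsWithin
  obtain ⟨ε, ⟨he, hlt⟩, hpos⟩ := ((ev.and h1).and hpos).exists
  have key : ∀ i, (v + ε • u - x i ∈ P → v - x i ∈ D P u) ∧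
      (v - x i ∈ D P u → v + ε • u - x i ∈ interior P) := by
    intro i
    have e : v + ε • u - x i = v - x i + ε • u := by abel
    rw [e]
    by_cases hi : i ∈ {i | ∃ p ∈ P, ‖v - x i - p‖ ≤ ‖u‖}
    · exact he i hi
    · refine ⟨fun hc => absurd ⟨_, hc, ?_⟩ hi, fun hc => absurd ⟨_, hc.1, by simp⟩ hi⟩
      rw [sub_add_cancel_left, norm_neg, norm_smul, Real.norm_eq_abs, abs_of_pos hpos]
      nlinarith [norm_nonneg u]
  have hf := h.fin t v (D_sub (P := P) u)
  apply le_antisymm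
  · have := t.2.2 (v + ε • u) hf.toFinset (fun i hi => (key i).2 (by simpa using hi))
    unfold N
    rwa [Set.ncard_eq_toFinset_card _ hf]
  · obtain ⟨s, hs, hs2⟩ := t.2.1 (v + ε • u)
    unfold N
    rw [Set.ncard_eq_toFinset_card _ hf]
    refine hs.trans (Finset.card_le_card ?_)
    intro i hi
    simpa using (key i).1 (hs2 i hi)

lemma Poly.gen_neg (h : Poly P V) {u w : ℝ × ℝ} (g : Gen V u w) : Gen V (-u) (-w) := by
  refine ⟨h.neg _ g.1, fun y hy hyw => ?_⟩
  have := g.2 (-y) (h.neg _ hy) (fun hc => hyw (by rw [← hc, neg_neg]))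
  simp [cr] at *; linarith

/-- boundary -/
def Bd (P : Set (ℝ × ℝ)) : Set (ℝ × ℝ) := P \ interior P

lemma Bd_sub : Bd P ⊆ P := Set.sdiff_subset

lemma Poly.count1 (h : Poly P V) (t : IsKFoldTranslativeTiling P x k) {u w : ℝ × ℝ}
    (g : Gen V u w) (v : ℝ × ℝ) : N x v (interior P) + N x v (Bd P ∩ D P u) = k := by
  rw [← h.gen_count t g v, ← h.N_union t v interior_subset (fun q hq => hq.1.1) (fun q hq hq' => hq'.1.2 hq)]
  congr 1
  ext q
  constructor
  · rintro (hq | hq)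
    · exact h.int_sub_D u hq
    · exact hq.2
  · intro hq
    by_cases hi : q ∈ interior P
    · exact Or.inl hi
    · exact Or.inr ⟨⟨hq.1, hi⟩, hq⟩

lemma Poly.V_Bd (h : Poly P V) {w : ℝ × ℝ} (hw : w ∈ V) : w ∈ Bd P := ⟨h.subV hw, h.not_int hw⟩

lemma Poly.count2 (h : Poly P V) (t : IsKFoldTranslativeTiling P x k) {w : ℝ × ℝ}
    (hw : w ∈ V) (v : ℝ × ℝ) : 2 * N x v (interior P) + N x v (Bd P) = 2 * k + N x v {w, -w} := by
  obtain ⟨u, g⟩ := h.exposed hw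
  have c1 := h.count1 t g v
  have c2 := h.count1 t (h.gen_neg g) v
  have e : Bd P = ((Bd P ∩ D P u) ∪ (Bd P ∩ D P (-u))) ∪ {w, -w} := by
    ext q
    constructor
    · intro hq
      by_cases h1 : q = w
      · right; simp [h1]
      by_cases h2 : q = -w
      · right; simp [h2]
      left
      rcases h.gen_dich g hq.1 hq.2 h1 h2 with h3 | h3
      · exact Or.inl ⟨hq, h3⟩
      · exact Or.inr ⟨hq, h3⟩
    · rintro ((hq | hq) | hq)
      · exact hq.1
      · exact hq.1
      · rcases hq with rfl | hq
        · exact h.V_Bd hw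
        · rw [Set.mem_singleton_iff] at hq; subst hq; exact h.V_Bd (h.neg _ hw)
  have c3 := h.N_union t v (S := (Bd P ∩ D P u) ∪ (Bd P ∩ D P (-u))) (T := {w, -w}) (by
    rintro q (hq | hq) <;> exact hq.1.1) (by
    rintro q hq
    rcases hq with rfl | hq
    · exact h.subV hw
    · rw [Set.mem_singleton_iff] at hq; subst hq; exact h.subV (h.neg _ hw)) (by
    have n1 : w ∉ D P u := h.gen_not_D g (Or.inl rfl)
    have n2 : -w ∉ D P u := h.gen_not_D g (Or.inr (cr_neg _ _))
    have n3 : -w ∉ D P (-u) := h.gen_not_D (h.gen_neg g) (Or.inl rfl)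
    have n4 : w ∉ D P (-u) := h.gen_not_D (h.gen_neg g) (Or.inr (by rw [cr_neg, neg_neg]))
    rintro q hq (rfl | hq')
    · rcases hq with hq | hq
      exacts [n1 hq.2, n4 hq.2]
    · rw [Set.mem_singleton_iff] at hq'; subst hq'
      rcases hq with hq | hq
      exacts [n2 hq.2, n3 hq.2])
  have c4 := h.N_union t v (S := Bd P ∩ D P u) (T := Bd P ∩ D P (-u)) (fun q hq => hq.1.1)
    (fun q hq => hq.1.1) (fun q hq hq' => hq.1.2 (h.not_both hq.2 hq'.2))
  rw [← e] at c3
  omega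

lemma Poly.ne_neg (h : Poly P V) {w : ℝ × ℝ} (hw : w ∈ V) : w ≠ -w := by
  intro hc
  apply h.not_int hw
  have : w = 0 := self_eq_neg.1 hc
  rw [this]; exact h.int0

lemma Poly.pair (h : Poly P V) (t : IsKFoldTranslativeTiling P x k) {w : ℝ × ℝ}
    (hw : w ∈ V) (v : ℝ × ℝ) : N x v {w, -w} = N x v {w} + N x v {-w} := by
  rw [← h.N_union t v]
  · rfl
  · rintro q rfl; exact h.subV hw
  · rintro q rfl; exact h.subV (h.neg _ hw)
  · rintro q rfl hq
    exact h.ne_neg hw hq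

lemma Poly.sumV (h : Poly P V) (t : IsKFoldTranslativeTiling P x k) (v : ℝ × ℝ) :
    N x v V = ∑ w ∈ V, N x v {w} := by
  classical
  have hf := h.fin t v (S := (V : Set (ℝ × ℝ))) (fun q hq => h.subV hq)
  unfold N
  rw [Set.ncard_eq_toFinset_card _ hf,
    Finset.card_eq_sum_card_fiberwise (f := fun i => v - x i) (t := V) (by
      intro i hi; simpa using hi)]
  refine Finset.sum_congr rfl fun w hw => ?_
  rw [← Set.ncard_coe_finset]
  congr 1
  ext i
  simp
  rintro rfl
  exact hw

lemma Poly.sum_pairs (h : Poly P V) (t : IsKFoldTranslativeTiling P x k) (v : ℝ × ℝ) {s : ℕ}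
    (hs : ∀ w ∈ V, N x v {w, -w} = s) : N x v V = 7 * s := by
  have e1 := h.sumV t v
  have e2 : ∑ w ∈ V, N x v {-w} = ∑ w ∈ V, N x v {w} := by
    apply Finset.sum_bij (fun w _ => -w)
    · intro w hw; exact h.neg _ hw
    · intro a _ b _ hab; exact neg_injective hab
    · intro b hb; exact ⟨-b, h.neg _ hb, neg_neg b⟩
    · intro w _; rfl
  have e3 : ∑ w ∈ V, N x v {w, -w} = 14 * s := by
    rw [Finset.sum_congr rfl hs, Finset.sum_const, h.card, smul_eq_mul]
  rw [Finset.sum_congr rfl (fun w hw => h.pair t hw v), Finset.sum_add_distrib, e2] at e3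
  omega

lemma Poly.N_pos (h : Poly P V) (t : IsKFoldTranslativeTiling P x k) {v : ℝ × ℝ} {S : Set (ℝ × ℝ)}
    (hS : S ⊆ P) {i : ι} (hi : v - x i ∈ S) : 1 ≤ N x v S := by
  unfold N
  exact (Set.ncard_pos (h.fin t v hS)).2 ⟨i, hi⟩

lemma Poly.sing (h : Poly P V) {w : ℝ × ℝ} (hw : w ∈ V) : ({w} : Set (ℝ × ℝ)) ⊆ P := by
  rintro q rfl; exact h.subV hw

/-- basic numerics at a vertex point -/
lemma Poly.basic (h : Poly P V) (t : IsKFoldTranslativeTiling P x k) (hk : k ≤ 5) {v : ℝ × ℝ} {i : ι}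
    (hv : v - x i ∈ V) :
    (∀ w ∈ V, N x v {w} + N x v {-w} = 1) ∧ N x v V = 7 ∧
      2 * N x v (interior P) + N x v (Bd P) = 2 * k + 1 ∧ 7 ≤ N x v (Bd P) := by
  set s := N x v {v - x i, -(v - x i)} with hs
  have c0 := h.count2 t hv v
  have hall : ∀ w ∈ V, N x v {w, -w} = s := by
    intro w hw
    have := h.count2 t hw v
    omega
  have h1 : 1 ≤ s := h.N_pos t (by
    intro q hq
    rcases hq with rfl | hq
    · exact h.subV hv
    · rw [Set.mem_singleton_iff] at hq; subst hq; exact h.subV (h.neg _ hv)) (i := i) (by simp)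
  have h7 := h.sum_pairs t v hall
  have hm : N x v V ≤ N x v (Bd P) := h.N_mono t v (fun w hw => h.V_Bd hw) Bd_sub
  have hs1 : s = 1 := by omega
  refine ⟨fun w hw => ?_, by omega, by omega, by omega⟩
  rw [← h.pair t hw v, hall w hw, hs1]

end count

end Tetra
namespace Tetra
variable {P : Set (ℝ × ℝ)} {V : Finset (ℝ × ℝ)}

section fin

variable {ι : Type} {x : ι → ℝ × ℝ} {k : ℕ}

lemma Poly.edge_bd (h : Poly P V) {w z q : ℝ × ℝ} (a : Adj V w z) (hq : q ∈ openSegment ℝ w z) :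
    q ∈ Bd P ∧ q ∉ V := by
  obtain ⟨n, hn0, e, _, hn, hm, _, _⟩ := h.adj_normal a
  have hs := openSegment_subset_segment ℝ w z hq
  have hl : cr n q = cr n w := by
    obtain ⟨a, b, ha, hb, hab, rfl⟩ := hq
    rw [cr_add, cr_smul, cr_smul, ← e, ← add_mul, hab, one_mul]
  refine ⟨⟨h.conv.segment_subset (h.subV a.1) (h.subV a.2.1) hs, fun hi => ?_⟩, fun hV => ?_⟩
  · have := h.int_lt hm hn0 hi
    linarith
  · have hne := a.2.2.1
    refine h.ext_seg hV a.1 a.2.1 ?_ ?_ hs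
    · intro hc
      rw [← hc, left_mem_openSegment_iff] at hq
      exact hne hq
    · intro hc
      rw [← hc, right_mem_openSegment_iff] at hq
      exact hne hq

lemma Poly.N_le_one (h : Poly P V) (t : IsKFoldTranslativeTiling P x k) (hk : k ≤ 5) {v w : ℝ × ℝ}
    {i : ι} (hv : v - x i ∈ V) (hw : w ∈ V) : N x v {w} ≤ 1 := by
  have := (h.basic t hk hv).1 w hw
  omega

lemma Poly.uniq (h : Poly P V) (t : IsKFoldTranslativeTiling P x k) (hk : k ≤ 5) {v : ℝ × ℝ}
    {i j : ι} (hv : v - x i ∈ V) (hij : v - x i = v - x j) : i = j := by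
  have h1 := h.N_le_one t hk hv hv
  unfold N at h1
  rw [Set.ncard_le_one (h.fin t v (h.sing hv))] at h1
  exact h1 i rfl j hij.symm

lemma Poly.free_edge (h : Poly P V) (t : IsKFoldTranslativeTiling P x k) (hk : k ≤ 5) {v : ℝ × ℝ}
    {i : ι} (hv : v - x i ∈ V) : ∃ w z j, Adj V w z ∧ v - x j = w ∧
      ∀ j, v - x j ∉ openSegment ℝ w z := by
  by_contra! hc
  obtain ⟨_, b2, b3, b4⟩ := h.basic t hk hv
  have hn : ∀ w : ℝ × ℝ, ∃ z, w ∈ V →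
      (Adj V w z ∧ ∀ y ∈ V, y ≠ w → y ≠ z → 0 < cr (z - w) (y - w)) := by
    intro w
    by_cases hw : w ∈ V
    · obtain ⟨z, hz⟩ := h.next hw
      exact ⟨z, fun _ => hz⟩
    · exact ⟨0, fun hh => absurd hh hw⟩
  choose nx hnx using hn
  have hj : ∀ i, ∃ j, v - x i ∈ V → v - x j ∈ openSegment ℝ (v - x i) (nx (v - x i)) := by
    intro i
    by_cases hi : v - x i ∈ V
    · obtain ⟨j, hj⟩ := hc _ _ i (hnx _ hi).1 rfl
      exact ⟨j, fun _ => hj⟩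
    · exact ⟨i, fun hh => absurd hh hi⟩
  choose f hf using hj
  have hVP : (V : Set (ℝ × ℝ)) ⊆ P := fun q hq => h.subV hq
  have c1 : N x v V ≤ N x v (Bd P \ V) := by
    unfold N
    refine Set.ncard_le_ncard_of_injOn f ?_ ?_ (h.fin t v (fun q hq => hq.1.1))
    · intro i hi
      exact h.edge_bd (hnx _ hi).1 (hf i hi)
    · intro i hi j hj hij
      have e1 := hf i hi
      have e2 := hf j hj
      rw [← hij] at e2
      exact h.uniq t hk hi (h.edges_disj (hnx _ hi).1 (hnx _ hj).1 (hnx _ hi).2 (hnx _ hj).2 e1 e2)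
  have c2 := h.N_union t v (S := V) (T := Bd P \ V) hVP (fun q hq => hq.1.1) (fun q hq hq' => hq'.2 hq)
  have c3 : N x v ((V : Set (ℝ × ℝ)) ∪ Bd P \ V) ≤ N x v (Bd P) := by
    refine h.N_mono t v ?_ Bd_sub
    rintro q (hq | hq)
    · exact h.V_Bd hq
    · exact hq.1
  omega

/-- crossing an edge -/
lemma Poly.cross (h : Poly P V) (t : IsKFoldTranslativeTiling P x k) {w z : ℝ × ℝ} (a : Adj V w z)
    (v : ℝ × ℝ) : N x v (Bd P ∩ D P (z - w)) ≤ N x (v + (z - w)) (interior P) := by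
  unfold N
  refine Set.ncard_le_ncard ?_ (h.fin t _ interior_subset)
  intro i hi
  have := h.step a hi.1.2 hi.2
  have e : v + (z - w) - x i = v - x i + (z - w) := by abel
  show v + (z - w) - x i ∈ interior P
  rwa [e]

lemma Poly.numer (h : Poly P V) (t : IsKFoldTranslativeTiling P x k) (hk : k ≤ 5) {v : ℝ × ℝ}
    {i : ι} (hv : v - x i ∈ V) : k = 5 ∧ N x v (interior P) = 2 ∧ N x v (Bd P \ V) = 0 := by
  obtain ⟨w, z, j, a, hj, hfree⟩ := h.free_edge t hk hv
  obtain ⟨z2, a2, hne⟩ := h.other a.2.1 w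
  have p : Path V w z z2 := ⟨a, a2, hne.symm⟩
  obtain ⟨w', _, g⟩ := h.path_gen p
  have c1 := h.count1 t g v
  have c2 : N x v (Bd P ∩ D P (z2 - w)) ≤ N x v ({w} ∪ (Bd P ∩ D P (z - w))) := by
    unfold N
    refine Set.ncard_le_ncard ?_ (h.fin t _ ?_)
    · intro i hi
      rcases h.keyQ p hi.1.2 hi.2 with h1 | h1 | h1
      · exact Or.inl h1
      · exact absurd h1 (hfree i)
      · exact Or.inr ⟨hi.1, h1⟩
    · rintro q (rfl | hq)
      · exact h.subV a.1
      · exact hq.1.1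
  have c3 := h.N_union_le (x := x) v {w} (Bd P ∩ D P (z - w))
  have c4 := h.N_le_one t hk hv a.1
  have c5 := h.cross t a v
  obtain ⟨_, b2, b3, b4⟩ := h.basic t hk hv
  have hv' : v + (z - w) - x j ∈ V := by
    have : v + (z - w) - x j = z := by rw [← hj]; abel
    rw [this]; exact a.2.1
  obtain ⟨_, b2', b3', b4'⟩ := h.basic t hk hv'
  have hVP : (V : Set (ℝ × ℝ)) ⊆ P := fun q hq => h.subV hq
  have d2 := h.N_union t v (S := V) (T := Bd P \ V) hVP (fun q hq => hq.1.1) (fun q hq hq' => hq'.2 hq)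
  have d3 : N x v ((V : Set (ℝ × ℝ)) ∪ Bd P \ V) ≤ N x v (Bd P) := by
    refine h.N_mono t v ?_ Bd_sub
    rintro q (hq | hq)
    · exact h.V_Bd hq
    · exact hq.1
  refine ⟨?_, ?_, ?_⟩ <;> omega

lemma Poly.three_dir (h : Poly P V) (t : IsKFoldTranslativeTiling P x k) (hk : k ≤ 5) {v : ℝ × ℝ}
    {i : ι} (hv : v - x i ∈ V) {w z z2 : ℝ × ℝ} (p : Path V w z z2) :
    N x v ((V : Set (ℝ × ℝ)) ∩ D P (z2 - w)) = 3 := by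
  obtain ⟨k5, n2, n0⟩ := h.numer t hk hv
  obtain ⟨w', _, g⟩ := h.path_gen p
  have c1 := h.count1 t g v
  have c2 : N x v ((V : Set (ℝ × ℝ)) ∩ D P (z2 - w)) = N x v (Bd P ∩ D P (z2 - w)) := by
    unfold N
    congr 1
    ext i
    constructor
    · intro hi
      exact ⟨h.V_Bd hi.1, hi.2⟩
    · intro hi
      refine ⟨?_, hi.2⟩
      by_contra hc
      have := h.N_pos t (v := v) (S := Bd P \ V) (fun q hq => hq.1.1) (i := i) ⟨hi.1, hc⟩
      omega
  omega

lemma Poly.rotN1 (h : Poly P V) (t : IsKFoldTranslativeTiling P x k) (hk : k ≤ 5) {v : ℝ × ℝ}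
    {i : ι} (hv : v - x i ∈ V) {w z : ℝ × ℝ} (a : Adj V w z) :
    N x v {w} + N x v ((V : Set (ℝ × ℝ)) ∩ D P (z - w)) = 3 := by
  obtain ⟨z2, a2, hne⟩ := h.other a.2.1 w
  have p : Path V w z z2 := ⟨a, a2, hne.symm⟩
  rw [← h.three_dir t hk hv p, ← h.N_union t v (h.sing a.1) (fun q hq => hq.2.1)]
  · congr 1
    ext q
    constructor
    · rintro (rfl | hq)
      · exact ⟨a.1, (h.rot1 p a.1).2 (Or.inl rfl)⟩
      · exact ⟨hq.1, (h.rot1 p hq.1).2 (Or.inr hq.2)⟩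
    · intro hq
      rcases (h.rot1 p hq.1).1 hq.2 with h1 | h1
      · exact Or.inl h1
      · exact Or.inr ⟨hq.1, h1⟩
  · rintro q rfl hq
    exact (h.edge_not_D a).1 hq.2

lemma Poly.rotN2 (h : Poly P V) (t : IsKFoldTranslativeTiling P x k) (hk : k ≤ 5) {v : ℝ × ℝ}
    {i : ι} (hv : v - x i ∈ V) {w z : ℝ × ℝ} (a : Adj V w z) :
    N x v {-z} + N x v ((V : Set (ℝ × ℝ)) ∩ D P (z - w)) = 3 := by
  obtain ⟨w0, a2, hne⟩ := h.other a.1 z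
  have p : Path V w0 w z := ⟨a2.symm, a, hne⟩
  have hz := h.neg _ a.2.1
  rw [← h.three_dir t hk hv p, ← h.N_union t v (h.sing hz) (fun q hq => hq.2.1)]
  · congr 1
    ext q
    constructor
    · rintro (rfl | hq)
      · exact ⟨hz, (h.rot2 p hz).2 (Or.inl rfl)⟩
      · exact ⟨hq.1, (h.rot2 p hq.1).2 (Or.inr hq.2)⟩
    · intro hq
      rcases (h.rot2 p hq.1).1 hq.2 with h1 | h1
      · exact Or.inl h1
      · exact Or.inr ⟨hq.1, h1⟩
  · rintro q rfl hq
    exact (h.edge_not_D a).2.2.2 hq.2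

/-- `w` is a relative position of `v` -/
def J (x : ι → ℝ × ℝ) (v w : ℝ × ℝ) : Prop := ∃ i, v - x i = w

lemma Poly.J_iff (h : Poly P V) (t : IsKFoldTranslativeTiling P x k) {v w : ℝ × ℝ} (hw : w ∈ V) :
    J x v w ↔ 1 ≤ N x v {w} := by
  constructor
  · rintro ⟨i, hi⟩
    exact h.N_pos t (h.sing hw) hi
  · intro hc
    unfold N at hc
    obtain ⟨i, hi⟩ := (Set.ncard_pos (h.fin t v (h.sing hw))).1 hc
    exact ⟨i, hi⟩

lemma Poly.alt (h : Poly P V) (t : IsKFoldTranslativeTiling P x k) (hk : k ≤ 5) {v w₀ : ℝ × ℝ}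
    (hv : J x v w₀) (hw₀ : w₀ ∈ V) {w z : ℝ × ℝ} (a : Adj V w z) : J x v w ↔ ¬ J x v z := by
  obtain ⟨i, rfl⟩ := hv
  have h1 := h.rotN1 t hk hw₀ a
  have h2 := h.rotN2 t hk hw₀ a
  have h3 := (h.basic t hk hw₀).1 z a.2.1
  rw [h.J_iff t a.1, h.J_iff t a.2.1]
  omega

lemma Poly.altneg (h : Poly P V) (t : IsKFoldTranslativeTiling P x k) (hk : k ≤ 5) {v w₀ : ℝ × ℝ}
    (hv : J x v w₀) (hw₀ : w₀ ∈ V) {w : ℝ × ℝ} (hw : w ∈ V) : J x v w ↔ ¬ J x v (-w) := by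
  obtain ⟨i, rfl⟩ := hv
  have h3 := (h.basic t hk hw₀).1 w hw
  rw [h.J_iff t hw, h.J_iff t (h.neg _ hw)]
  omega

lemma Poly.two (h : Poly P V) (t : IsKFoldTranslativeTiling P x k) (hk : k ≤ 5) {v w : ℝ × ℝ}
    (hv : J x v w) {z : ℝ × ℝ} (a : Adj V w z) :
    ∃ s1 s2, s1 ≠ s2 ∧ s1 ∈ V ∧ s2 ∈ V ∧ s1 ∈ D P (z - w) ∧ s2 ∈ D P (z - w) ∧
      J x v s1 ∧ J x v s2 := by
  obtain ⟨i, rfl⟩ := hv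
  have h1 := h.rotN1 t hk a.1 a
  have h2 := h.N_pos t (v := v) (h.sing a.1) (i := i) rfl
  have h3 := h.N_le_one t hk a.1 a.1
  have h4 : 1 < N x v ((V : Set (ℝ × ℝ)) ∩ D P (z - (v - x i))) := by omega
  unfold N at h4
  rw [Set.one_lt_ncard (h.fin t v (fun q hq => hq.2.1))] at h4
  obtain ⟨j1, m1, j2, m2, hne⟩ := h4
  exact ⟨_, _, fun hc => hne (h.uniq t hk m1.1 hc), m1.1, m2.1, m1.2, m2.2, ⟨j1, rfl⟩, ⟨j2, rfl⟩⟩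

set_option maxHeartbeats 2000000 in
lemma Poly.absurd5 (h : Poly P V) (t : IsKFoldTranslativeTiling P x k) (hk0 : 0 < k)
    (hk : k ≤ 5) : False := by
  -- a vertex point
  obtain ⟨v1, hv1, -⟩ := h.three 0 0 0 0
  obtain ⟨s, hs, -⟩ := t.2.1 0
  obtain ⟨i0, -⟩ := Finset.card_pos.1 (hk0.trans_le hs)
  set v' := x i0 + v1 with hv'
  have j1 : J x v' v1 := ⟨i0, by rw [hv']; abel⟩
  obtain ⟨v2, a12, -⟩ := h.other hv1 0
  obtain ⟨v3, a23, n13⟩ := h.other a12.2.1 v1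
  obtain ⟨v4, a34, n24⟩ := h.other a23.2.1 v2
  have j2 : ¬ J x v' v2 := (h.alt t hk j1 hv1 a12).1 j1
  have j3 : J x v' v3 := by
    by_contra hc
    exact j2 ((h.alt t hk j1 hv1 a23).2 hc)
  obtain ⟨i3, hi3⟩ := j3
  set u1 := v' + v2 - v1 with hu1
  set u3 := v' + v4 - v3 with hu3
  have hV2 := a12.2.1
  have hV3 := a23.2.1
  have hV4 := a34.2.1
  have k2 : J x u1 v2 := ⟨i0, by rw [hu1, hv']; abel⟩
  have l4 : J x u3 v4 := ⟨i3, by rw [hu3, ← hi3]; abel⟩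
  have A1 : ∀ w z, Adj V w z → (J x u1 w ↔ ¬ J x u1 z) := fun w z a => h.alt t hk k2 hV2 a
  have A3 : ∀ w z, Adj V w z → (J x u3 w ↔ ¬ J x u3 z) := fun w z a => h.alt t hk l4 hV4 a
  have l3 : ¬ J x u3 v3 := (A3 _ _ a34.symm).1 l4
  have l2 : J x u3 v2 := (A3 _ _ a23).2 l3
  have JJ := h.connected (J x u1) (J x u3) A1 A3 hV2 (by tauto)
  have k3 : ¬ J x u1 v3 := (A1 _ _ a23).1 k2
  have k1 : ¬ J x u1 v1 := (A1 _ _ a12.symm).1 k2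
  have kn2 : ¬ J x u1 (-v2) := (h.altneg t hk k2 hV2 hV2).1 k2
  have kn1 : J x u1 (-v1) := by
    by_contra hc
    exact k1 ((h.altneg t hk k2 hV2 hv1).2 hc)
  have p1 : Path V v3 v2 v1 := ⟨a23.symm, a12.symm, n13⟩
  have p2 : Path V v4 v3 v2 := ⟨a34.symm, a23.symm, n24⟩
  have key : ∀ y ∈ V, J x u1 y →
      ((y ∈ D P (v1 - v2) ∨ y = -v1) ↔ (y ∈ D P (v3 - v4) ∨ y = v4)) := by
    intro y hy hJ
    have r1 := h.rot1 p1 hy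
    have r2 := h.rot2 p1 hy
    have r3 := h.rot1 p2 hy
    have r4 := h.rot2 p2 hy
    have e1 : y ≠ v3 := by rintro rfl; exact k3 hJ
    have e2 : y ≠ -v2 := by rintro rfl; exact kn2 hJ
    tauto
  have nd := h.edge_not_D a12.symm
  have nd' := h.edge_not_D a34.symm
  have h41 : v4 ≠ -v1 := by
    intro hc
    obtain ⟨s1, _, _, hs1, _, hd, _, hJ, _⟩ := h.two t hk k2 a12.symm
    have hd3 : s1 ∈ D P (v3 - v4) := by
      rcases (key s1 hs1 hJ).1 (Or.inl hd) with h1 | h1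
      · exact h1
      · exact absurd hd (by rw [h1, hc]; exact nd.2.2.2)
    have a45 : Adj V v4 (-v2) := by rw [hc]; exact h.adj_neg a12
    have p : Path V (-v2) v4 v3 := ⟨a45.symm, a34.symm, fun hc' => by
      refine h.not_self_adj (w := v2) ?_
      rw [hc']; exact a23⟩
    have r1 := h.rot1 p hs1
    have r2 := h.rot2 p hs1
    have e2 : s1 ≠ -v2 := by rintro rfl; exact kn2 hJ
    have r3 : s1 ∈ D P (v4 - -v2) := by tauto
    have e : v4 - -v2 = -(v1 - v2) := by rw [hc]; abel
    rw [e] at r3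
    exact h.not_int hs1 (h.not_both hd r3)
  have k4 : J x u1 v4 := (JJ _ hV4).2 l4
  have d4 : v4 ∈ D P (v1 - v2) := by
    have := (key _ hV4 k4).2 (Or.inr rfl)
    tauto
  have hVn1 := h.neg _ hv1
  have dn1 : -v1 ∈ D P (v3 - v4) := by
    rcases (key _ hVn1 kn1).1 (Or.inr rfl) with h1 | h1
    · exact h1
    · exact absurd h1.symm h41
  obtain ⟨s, hsV, hsd, hsJ, hs4⟩ : ∃ s ∈ V, s ∈ D P (v1 - v2) ∧ J x u1 s ∧ s ≠ v4 := by
    obtain ⟨s1, s2, hne, hs1, hs2, d1, d2, J1, J2⟩ := h.two t hk k2 a12.symm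
    by_cases e : s1 = v4
    · exact ⟨s2, hs2, d2, J2, fun hc => hne (e.trans hc.symm)⟩
    · exact ⟨s1, hs1, d1, J1, e⟩
  have hsn : s ≠ -v1 := by rintro rfl; exact nd.2.2.2 hsd
  have hsd3 : s ∈ D P (v3 - v4) := by
    rcases (key s hsV hsJ).1 (Or.inl hsd) with h1 | h1
    · exact h1
    · exact absurd h1 hs4
  have ln1 := (JJ _ hVn1).1 kn1
  have ls := (JJ _ hsV).1 hsJ
  -- four interior indices
  obtain ⟨c1, hc1⟩ := k4
  obtain ⟨c2, hc2⟩ := hsJ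
  obtain ⟨c3, hc3⟩ := ln1
  obtain ⟨c4, hc4⟩ := ls
  have I1 : v' - x c1 ∈ interior P := by
    have := h.step a12.symm (h.not_int hV4) d4
    convert this using 1
    rw [← hc1, hu1]; abel
  have I2 : v' - x c2 ∈ interior P := by
    have := h.step a12.symm (h.not_int hsV) hsd
    convert this using 1
    rw [← hc2, hu1]; abel
  have I3 : v' - x c3 ∈ interior P := by
    have := h.step a34.symm (h.not_int hVn1) dn1
    convert this using 1
    rw [← hc3, hu3]; abel
  have I4 : v' - x c4 ∈ interior P := by
    have := h.step a34.symm (h.not_int hsV) hsd3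
    convert this using 1
    rw [← hc4, hu3]; abel
  have m0 : v' - x i0 ∈ V := by rw [hv', add_sub_cancel_left]; exact hv1
  have n2 := (h.numer t hk m0).2.1
  unfold N at n2
  rw [Set.ncard_eq_two] at n2
  obtain ⟨y1, y2, hy, hset⟩ := n2
  have mem : ∀ c, v' - x c ∈ interior P → c = y1 ∨ c = y2 := by
    intro c hc
    have : c ∈ {i | v' - x i ∈ interior P} := hc
    rw [hset] at this
    exact this
  have q1 := mem _ I1
  have q2 := mem _ I2
  have q3 := mem _ I3
  have q4 := mem _ I4
  have ne1 : c1 ≠ c2 := by rintro rfl; exact hs4 (hc2.symm.trans hc1)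
  have ne2 : c3 ≠ c4 := by rintro rfl; exact hsn (hc4.symm.trans hc3)
  have : (c1 = c3 ∧ c2 = c4) ∨ (c1 = c4 ∧ c2 = c3) := by
    clear * - q1 q2 q3 q4 ne1 ne2
    rcases q1 with rfl | rfl <;> rcases q2 with rfl | rfl <;> rcases q3 with rfl | rfl <;>
      rcases q4 with rfl | rfl <;> first | exact absurd rfl ne1 | exact absurd rfl ne2 | simp
  rcases this with ⟨rfl, rfl⟩ | ⟨rfl, rfl⟩
  · apply h41
    have : u1 = u3 := by
      have := hc2.trans hc4.symm
      simpa using this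
    rw [← hc1, ← hc3, this]
  · refine h.ext_seg hsV hV4 hVn1 hs4.symm hsn.symm ?_
    refine ⟨1/2, 1/2, by norm_num, by norm_num, by norm_num, ?_⟩
    have e : v4 + -v1 = s + s := by
      rw [← hc1, ← hc3]
      nth_rewrite 1 [← hc2]
      rw [← hc4]
      abel
    rw [← smul_add, e, ← two_smul ℝ s, smul_smul]
    norm_num

end fin

end Tetra
namespace Tetra
lemma hull_ext {P : Set (ℝ × ℝ)} {V : Finset (ℝ × ℝ)} (hP : IsConvexPolygon P V) :
    ∀ v ∈ V, v ∉ convexHull ℝ ((V : Set (ℝ × ℝ)) \ {v}) := by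
  intro v hv hc
  obtain ⟨h1, h2, _⟩ := hP
  have hcv : Convex ℝ P := h1 ▸ convex_convexHull ℝ _
  have h3 := (hcv.mem_extremePoints_iff_mem_sdiff_convexHull_sdiff.1 (h2 v hv)).2
  apply h3
  refine convexHull_mono ?_ hc
  rintro q ⟨hq, hq2⟩
  exact ⟨h1 ▸ subset_convexHull ℝ _ hq, hq2⟩

lemma ext_V {P : Set (ℝ × ℝ)} {V : Finset (ℝ × ℝ)} (hP : IsConvexPolygon P V) (v : ℝ × ℝ) :
    v ∈ V ↔ v ∈ Set.extremePoints ℝ P := by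
  refine ⟨hP.2.1 v, fun hv => ?_⟩
  rw [hP.1] at hv
  exact extremePoints_convexHull_subset hv

lemma mem_tr {P : Set (ℝ × ℝ)} {c q : ℝ × ℝ} : q ∈ -c +ᵥ P ↔ q + c ∈ P := by
  rw [Set.mem_vadd_set_iff_neg_vadd_mem, neg_neg, vadd_eq_add, add_comm]

lemma mem_tr_int {P : Set (ℝ × ℝ)} {c q : ℝ × ℝ} : q ∈ interior (-c +ᵥ P) ↔ q + c ∈ interior P := by
  rw [interior_vadd, mem_tr]

lemma poly_of {P : Set (ℝ × ℝ)} {V : Finset (ℝ × ℝ)} (hP : IsConvexPolygon P V)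
    (hV : V.card = 14) {c : ℝ × ℝ} (hc : ∀ p ∈ P, 2 • c - p ∈ P) :
    Poly (-c +ᵥ P) (-c +ᵥ V) := by
  have hcv : Convex ℝ P := hP.1 ▸ convex_convexHull ℝ _
  have hcoe : ((-c +ᵥ V : Finset (ℝ × ℝ)) : Set (ℝ × ℝ)) = -c +ᵥ (V : Set (ℝ × ℝ)) :=
    Finset.coe_vadd_finset _ _
  have hQ : IsConvexPolygon (-c +ᵥ P) (-c +ᵥ V) := by
    refine ⟨?_, ?_, ?_⟩
    · rw [hcoe, convexHull_vadd, ← hP.1]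
    · intro v hv
      rw [← Finset.mem_coe, hcoe, mem_tr] at hv
      have := hP.2.1 _ hv
      rw [mem_extremePoints] at this ⊢
      refine ⟨mem_tr.2 this.1, ?_⟩
      intro a ha b hb ho
      have := this.2 (a + c) (mem_tr.1 ha) (b + c) (mem_tr.1 hb) (by
        obtain ⟨s, t, hs, ht, hst, rfl⟩ := ho
        refine ⟨s, t, hs, ht, hst, ?_⟩
        rw [smul_add, smul_add, add_add_add_comm, ← add_smul, hst, one_smul])
      simpa using this
    · rw [interior_vadd]
      exact hP.2.2.vadd_set
  have hcc : ∀ q ∈ -c +ᵥ P, -q ∈ -c +ᵥ P := by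
    intro q hq
    rw [mem_tr] at hq ⊢
    have := hc _ hq
    have e : -q + c = 2 • c - (q + c) := by rw [two_smul]; abel
    rwa [e]
  have hcvQ : Convex ℝ (-c +ᵥ P) := hcv.vadd _
  refine ⟨hQ.1, hull_ext hQ, ?_, ?_, ?_⟩
  · intro v hv
    rw [ext_V hQ, mem_extremePoints] at hv ⊢
    refine ⟨hcc _ hv.1, ?_⟩
    intro a ha b hb ho
    have := hv.2 _ (hcc _ ha) _ (hcc _ hb) (by
      obtain ⟨s, t, hs, ht, hst, e⟩ := ho
      refine ⟨s, t, hs, ht, hst, ?_⟩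
      rw [smul_neg, smul_neg, ← neg_add, e, neg_neg])
    exact ⟨neg_eq_iff_eq_neg.1 this.1, neg_eq_iff_eq_neg.1 this.2⟩
  · obtain ⟨q, hq⟩ := hQ.2.2
    have := hcvQ.combo_interior_self_mem_interior hq (hcc _ (interior_subset hq))
      (a := 1/2) (b := 1/2) (by norm_num) (by norm_num) (by norm_num)
    simpa using this
  · rw [Finset.card_vadd_finset, hV]

lemma tile_of {P : Set (ℝ × ℝ)} {k : ℕ} {ι : Type} {x : ι → ℝ × ℝ}
    (t : IsKFoldTranslativeTiling P x k) (c : ℝ × ℝ) :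
    IsKFoldTranslativeTiling (-c +ᵥ P) (fun i => x i + c) k := by
  have e : ∀ (p : ℝ × ℝ) (i : ι), p - (x i + c) + c = p - x i := fun p i => by abel
  refine ⟨fun R => ?_, fun p => ?_, fun p s hs => ?_⟩
  · refine (t.1 (R + ‖c‖)).subset ?_
    intro i hi
    have h1 : ‖x i + c‖ ≤ R := hi
    have h2 := norm_sub_le (x i + c) c
    rw [add_sub_cancel_right] at h2
    show ‖x i‖ ≤ _
    linarith
  · obtain ⟨s, hs, h2⟩ := t.2.1 p
    exact ⟨s, hs, fun i hi => by rw [mem_tr, e]; exact h2 i hi⟩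
  · refine t.2.2 p s fun i hi => ?_
    have := hs i hi
    rwa [mem_tr_int, e] at this

end Tetra

theorem tau_tetradecagon_ge (P : Set (ℝ × ℝ)) (V : Finset (ℝ × ℝ))
    (hP : IsConvexPolygon P V) (hV : V.card = 14) (hsym : IsCentrallySymmetric P)
    (k : ℕ) (hk : 0 < k) (ι : Type) (x : ι → ℝ × ℝ)
    (htile : IsKFoldTranslativeTiling P x k) :
    6 ≤ k := by
  obtain ⟨c, hc⟩ := hsym
  by_contra hlt
  exact (Tetra.poly_of hP hV hc).absurd5 (Tetra.tile_of htile c) hk (by omega)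
end
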